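/- (Lovász Conjecture, proved by Babson and Kozlov.) Let G be a finite simple graph and r ≥ 1, k ≥ −1 integers. If the Hom complex Hom(C_{2r+1}, G) — realized as the geometric realization of the nerve of the poset of multihomomorphisms from the odd cycle C_{2r+1} to G ordered by pointwise inclusion — is k-connected, then χ(G) ≥ k + 4. -/

import Mathlib

open CategoryTheory

/-- A space is `k`-connected (for an integer `k ≥ -1`) if it is nonempty and all its
homotopy groups `π_n` vanish for `0 ≤ n ≤ k` (for `n = 0` this means
path-connectedness). `(-1)`-connected just means nonempty. -/
def KConnected (k : ℤ) (X : Type*) [TopologicalSpace X] : Prop :=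
  Nonempty X ∧ ∀ n : ℕ, (n : ℤ) ≤ k → ∀ x : X, Subsingleton (HomotopyGroup (Fin n) X x)

/-- The poset of multihomomorphisms from `T` to `G`: functions `η` assigning to each
vertex `x` of `T` a nonempty set `η x ⊆ V(G)` such that for every edge `(x,y)` of `T`,
every `a ∈ η x` and every `b ∈ η y` are adjacent in `G`; ordered by pointwise
inclusion. This is the face poset of the polyhedral complex `Hom(T,G)`. -/
def MultiHom {V W : Type} (T : SimpleGraph V) (G : SimpleGraph W) : Type :=
  {η : V → Finset W // (∀ x, (η x).Nonempty) ∧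
    ∀ x y, T.Adj x y → ∀ a ∈ η x, ∀ b ∈ η y, G.Adj a b}

instance {V W : Type} (T : SimpleGraph V) (G : SimpleGraph W) :
    Preorder (MultiHom T G) :=
  Subtype.preorder _

/-- The Hom complex `Hom(T,G)`, realized topologically as the geometric realization
of the nerve (order complex) of the poset of multihomomorphisms from `T` to `G`
(the barycentric subdivision of the polyhedral complex `Hom(T,G)`). -/
noncomputable def homComplex {V W : Type} (T : SimpleGraph V) (G : SimpleGraph W) :
    TopCat :=
  SSet.toTop.obj (nerve (MultiHom T G))


section Realization

set_option linter.unusedSectionVars false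
set_option linter.unusedVariables false

open Opposite

variable {W V : Type} [Fintype V] (T : SimpleGraph W) (G : SimpleGraph V)

/-- Target space of the evaluation map. -/
def EvSpace : Type :=
  {f : W → V → ℝ // (∀ w v, 0 ≤ f w v) ∧ (∀ w, ∑ v, f w v = 1) ∧
    ∀ x y, T.Adj x y → ∀ a b, f x a ≠ 0 → f y b ≠ 0 → G.Adj a b}

instance : TopologicalSpace (EvSpace T G) :=
  inferInstanceAs (TopologicalSpace (Subtype _))

open Classical in
/-- Uniform distribution on `η w`. -/
noncomputable def unif (η : MultiHom T G) (w : W) (v : V) : ℝ :=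
  if v ∈ η.1 w then ((η.1 w).card : ℝ)⁻¹ else 0

lemma unif_nonneg (η : MultiHom T G) (w : W) (v : V) : 0 ≤ unif T G η w v := by
  unfold unif; split_ifs <;> positivity

lemma unif_sum (η : MultiHom T G) (w : W) : ∑ v, unif T G η w v = 1 := by
  classical
  unfold unif
  rw [← Finset.sum_filter]
  have h := η.2.1 w
  simp
  rw [mul_inv_cancel₀]
  have := h.card_pos
  positivity

lemma unif_mem (η : MultiHom T G) (w : W) (v : V) (h : unif T G η w v ≠ 0) : v ∈ η.1 w := by
  unfold unif at h; by_contra h'; simp [h'] at h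

/-- The affine simplex spanned by a chain. -/
noncomputable def evSimplex {n : ℕ} (s : Fin (n + 1) → MultiHom T G) (hs : Monotone s)
    (t : stdSimplex ℝ (Fin (n + 1))) : EvSpace T G :=
  ⟨fun w v => ∑ i, t i * unif T G (s i) w v, by
    refine ⟨fun w v => Finset.sum_nonneg fun i _ => mul_nonneg (t.2.1 i) (unif_nonneg T G _ _ _), 
      fun w => ?_, ?_⟩
    · rw [Finset.sum_comm]
      simp_rw [← Finset.mul_sum, unif_sum, mul_one]
      exact t.2.2
    · have key : ∀ w v, (∑ i, t i * unif T G (s i) w v) ≠ 0 → v ∈ (s (Fin.last n)).1 w := by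
        intro w v h
        obtain ⟨i, -, hi⟩ := Finset.exists_ne_zero_of_sum_ne_zero h
        have := unif_mem T G _ _ _ (right_ne_zero_of_mul hi)
        exact hs (Fin.le_last i) w this
      intro x y hxy a b ha hb
      exact (s (Fin.last n)).2.2 x y hxy a (key _ _ ha) b (key _ _ hb)⟩

lemma evSimplex_continuous {n : ℕ} (s : Fin (n + 1) → MultiHom T G) (hs : Monotone s) :
    Continuous (evSimplex T G s hs) := by
  refine Continuous.subtype_mk ?_ _
  refine continuous_pi fun w => continuous_pi fun v => ?_
  refine continuous_finsetSum _ fun i _ => ?_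
  refine Continuous.mul ?_ continuous_const
  exact (continuous_apply i).comp continuous_subtype_val

lemma evSimplex_map {n m : ℕ} (s : Fin (n + 1) → MultiHom T G) (hs : Monotone s)
    (f : Fin (m + 1) →o Fin (n + 1)) (t : stdSimplex ℝ (Fin (m + 1))) :
    evSimplex T G s hs (stdSimplex.map f t) = evSimplex T G (s ∘ f) (hs.comp f.monotone) t := by
  classical
  apply Subtype.ext
  funext w v
  simp only [evSimplex, stdSimplex.map_coe, FunOnFinite.linearMap_apply_apply, Function.comp,
    Finset.sum_mul]
  rw [Finset.sum_comm' (t' := Finset.univ) (s' := fun j => {f j}) (by simp [eq_comm])]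
  simp

/-- Simplicial evaluation map. -/
noncomputable def evSSet : nerve (MultiHom T G) ⟶ TopCat.toSSet.obj (TopCat.of (EvSpace T G)) where
  app n := ↾fun s => (TopCat.toSSetObjEquiv (TopCat.of (EvSpace T G)) n).symm
    ⟨evSimplex T G s.obj s.monotone, evSimplex_continuous T G _ _⟩
  naturality n m f := by
    ext s
    apply (TopCat.toSSetObjEquiv (TopCat.of (EvSpace T G)) m).injective
    ext t
    exact (evSimplex_map T G s.obj s.monotone (f.unop.toOrderHom) t).symm

/-- Evaluation on the realization. -/
noncomputable def evTop : homComplex T G ⟶ TopCat.of (EvSpace T G) :=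
  (sSetTopAdj.homEquiv _ _).symm (evSSet T G)

variable {T} in
/-- Action of a graph automorphism on multihomomorphisms. -/
def mhMap (ρ : W → W) (hadj : ∀ x y, T.Adj x y → T.Adj (ρ x) (ρ y)) (η : MultiHom T G) :
    MultiHom T G :=
  ⟨fun w => η.1 (ρ w), fun w => η.2.1 _, fun x y h => η.2.2 _ _ (hadj x y h)⟩

variable {T} in
lemma mhMap_mono (ρ : W → W) (hadj : ∀ x y, T.Adj x y → T.Adj (ρ x) (ρ y)) :
    Monotone (mhMap G ρ hadj) := fun _ _ h w => h (ρ w)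

/-- Action on the evaluation space. -/
noncomputable def evAct (ρ : W → W) (hadj : ∀ x y, T.Adj x y → T.Adj (ρ x) (ρ y)) :
    TopCat.of (EvSpace T G) ⟶ TopCat.of (EvSpace T G) :=
  TopCat.ofHom ⟨fun f => (⟨fun w => f.1 (ρ w), fun w => f.2.1 _, fun w => f.2.2.1 _,
    fun x y h => f.2.2.2 _ _ (hadj x y h)⟩ : EvSpace T G), by
    refine Continuous.subtype_mk ?_ _
    exact continuous_pi fun w => (continuous_apply (ρ w)).comp continuous_subtype_val⟩

lemma realization (ρ : W → W) (hρ : ∀ w, ρ (ρ w) = w)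
    (hadj : ∀ x y, T.Adj x y → T.Adj (ρ x) (ρ y)) :
    ∃ (R : homComplex T G → homComplex T G) (Ψ : homComplex T G → W → V → ℝ),
      Continuous R ∧ (∀ p, R (R p) = p) ∧ Continuous Ψ ∧ (∀ p w, Ψ (R p) w = Ψ p (ρ w)) ∧
      (∀ p w v, 0 ≤ Ψ p w v) ∧ (∀ p w, ∑ v, Ψ p w v = 1) ∧
      (∀ p x y, T.Adj x y → ∀ a b, Ψ p x a ≠ 0 → Ψ p y b ≠ 0 → G.Adj a b) := by
  let R₀ : nerve (MultiHom T G) ⟶ nerve (MultiHom T G) := nerveMap (mhMap_mono G ρ hadj).functor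
  let R : homComplex T G ⟶ homComplex T G := SSet.toTop.map R₀
  have h1 : R₀ ≫ R₀ = 𝟙 _ := by
    ext n s i
    apply Subtype.ext
    funext w
    change (s.obj i).1 (ρ (ρ w)) = (s.obj i).1 w
    rw [hρ]
  have h2 : R ≫ R = 𝟙 _ := by
    change SSet.toTop.map R₀ ≫ SSet.toTop.map R₀ = _
    rw [← SSet.toTop.map_comp, h1, SSet.toTop.map_id]; rfl
  have h3 : R ≫ evTop T G = evTop T G ≫ evAct T G ρ hadj := by
    change SSet.toTop.map R₀ ≫ (sSetTopAdj.homEquiv _ _).symm (evSSet T G) =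
      (sSetTopAdj.homEquiv _ _).symm (evSSet T G) ≫ _
    rw [← Adjunction.homEquiv_naturality_left_symm, ← Adjunction.homEquiv_naturality_right_symm]
    congr 1
  refine ⟨R, fun p => (evTop T G p).1, R.hom.continuous, fun p => ?_, ?_, fun p w => ?_,
    fun p => (evTop T G p).2.1, fun p => (evTop T G p).2.2.1, fun p => (evTop T G p).2.2.2⟩
  · exact congrArg (fun f => f.hom p) h2
  · exact continuous_subtype_val.comp (evTop T G).hom.continuous
  · have := congrArg (fun f => (f.hom p).1 w) h3
    exact this

end Realization

section Extension

set_option linter.unusedVariables false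

lemma fin01 (j : Fin (0 + 1)) : j = 0 := Subsingleton.elim (α := Fin 1) j 0

open unitInterval

/-- Drop the last coordinate. -/
abbrev frontPart {i : ℕ} (x : Fin (i + 1) → ℝ) : Fin i → ℝ := fun j => x j.castSucc

lemma frontPart_snoc {i : ℕ} (x : Fin i → ℝ) (a : ℝ) :
    frontPart (Fin.snoc x a : Fin (i + 1) → ℝ) = x := by
  funext j
  simp [frontPart]

/-- The gauge used on `ℝ^{i+1}`. -/
noncomputable def nn {i : ℕ} (x : Fin (i + 1) → ℝ) : ℝ := ‖(frontPart x : Fin i → ℝ)‖ + |x (Fin.last i)|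

lemma nn_continuous {i : ℕ} : Continuous (nn : (Fin (i + 1) → ℝ) → ℝ) := by
  unfold nn
  have : Continuous (fun x : Fin (i + 1) → ℝ => (frontPart x : Fin i → ℝ)) :=
    continuous_pi fun j => continuous_apply _
  fun_prop

lemma nn_nonneg {i : ℕ} (x : Fin (i + 1) → ℝ) : 0 ≤ nn x := by unfold nn; positivity

lemma nn_smul {i : ℕ} (c : ℝ) (x : Fin (i + 1) → ℝ) : nn (c • x) = |c| * nn x := by
  unfold nn
  have : (frontPart (c • x) : Fin i → ℝ) = c • (frontPart x : Fin i → ℝ) := rfl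
  rw [this, norm_smul, Pi.smul_apply, smul_eq_mul, abs_mul, Real.norm_eq_abs]; ring

lemma nn_eq_zero {i : ℕ} {x : Fin (i + 1) → ℝ} (h : nn x = 0) : x = 0 := by
  unfold nn at h
  have h1 : ‖(frontPart x : Fin i → ℝ)‖ = 0 := by
    have := norm_nonneg (frontPart x : Fin i → ℝ); have := abs_nonneg (x (Fin.last i)); linarith
  have h2 : |x (Fin.last i)| = 0 := by
    have := norm_nonneg (frontPart x : Fin i → ℝ); have := abs_nonneg (x (Fin.last i)); linarith
  funext j
  refine Fin.lastCases ?_ (fun j => ?_) j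
  · simpa using h2
  · exact congrFun (norm_eq_zero.1 h1) j

lemma nn_zero {i : ℕ} : nn (0 : Fin (i + 1) → ℝ) = 0 := by
  have := nn_smul (0 : ℝ) (0 : Fin (i + 1) → ℝ); simpa using this

lemma nn_pos {i : ℕ} {x : Fin (i + 1) → ℝ} (h : x ≠ 0) : 0 < nn x :=
  lt_of_le_of_ne (nn_nonneg x) fun h' => h (nn_eq_zero h'.symm)

/-- Centered cube coordinates. -/
noncomputable def ctr {i : ℕ} (y : Fin i → I) : Fin i → ℝ := fun j => 2 * (y j : ℝ) - 1

lemma ctr_continuous {i : ℕ} : Continuous (ctr : (Fin i → I) → Fin i → ℝ) := by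
  unfold ctr; fun_prop

lemma ctr_norm_le {i : ℕ} (y : Fin i → I) : ‖ctr y‖ ≤ 1 := by
  rw [pi_norm_le_iff_of_nonneg zero_le_one]
  intro j
  rw [Real.norm_eq_abs, abs_le]
  have := (y j).2.1; have := (y j).2.2
  unfold ctr; constructor <;> linarith

lemma ctr_boundary {i : ℕ} (y : Fin i → I) (h : y ∈ Cube.boundary (Fin i)) : ‖ctr y‖ = 1 := by
  refine le_antisymm (ctr_norm_le y) ?_
  obtain ⟨j, hj⟩ := h
  refine le_trans ?_ (norm_le_pi_norm _ j)
  unfold ctr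
  rcases hj with hj | hj <;> rw [hj] <;> norm_num

lemma ctr_boundary' {i : ℕ} (hi : 0 < i) (y : Fin i → I) (h : ‖ctr y‖ = 1) :
    y ∈ Cube.boundary (Fin i) := by
  by_contra hb
  have : ‖ctr y‖ < 1 := by
    rw [pi_norm_lt_iff zero_lt_one]
    intro j
    have h0 : (y j : ℝ) ≠ 0 := fun h0 => hb ⟨j, Or.inl (Subtype.ext h0)⟩
    have h1 : (y j : ℝ) ≠ 1 := fun h0 => hb ⟨j, Or.inr (Subtype.ext h0)⟩
    have h0' := lt_of_le_of_ne (y j).2.1 h0.symm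
    have h1' := lt_of_le_of_ne (y j).2.2 h1
    rw [Real.norm_eq_abs, abs_lt]
    unfold ctr; constructor <;> linarith
  linarith

lemma ctr_injective {i : ℕ} : Function.Injective (ctr : (Fin i → I) → Fin i → ℝ) := by
  intro y y' h
  funext j
  have := congrFun h j
  unfold ctr at this
  apply Subtype.ext; linarith

lemma ctr_surj {i : ℕ} (x : Fin i → ℝ) (h : ‖x‖ ≤ 1) : ∃ y, ctr y = x := by
  rw [pi_norm_le_iff_of_nonneg zero_le_one] at h
  refine ⟨fun j => ⟨(x j + 1) / 2, ?_⟩, ?_⟩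
  · have := h j
    rw [Real.norm_eq_abs, abs_le] at this
    constructor <;> linarith [this.1, this.2]
  · funext j; simp only [ctr]; ring

/-- Scale factor. -/
noncomputable def scl (m : ℝ) : ℝ := 2 * (1 - m) / max m (1 - m)

lemma max_pos' (m : ℝ) : 0 < max m (1 - m) := by
  rcases le_total m (1 - m) with h | h
  · rw [max_eq_right h]; linarith
  · rw [max_eq_left h]; linarith

lemma scl_mul {m : ℝ} (h0 : 0 ≤ m) (h1 : m ≤ 1) : scl m * m = 1 - |2 * m - 1| := by
  unfold scl
  rw [div_mul_eq_mul_div, div_eq_iff (max_pos' m).ne']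
  rcases le_total m (1 - m) with h | h
  · rw [max_eq_right h, abs_of_nonpos (by linarith)]; ring
  · rw [max_eq_left h, abs_of_nonneg (by linarith)]; ring

lemma scl_nonneg {m : ℝ} (h1 : m ≤ 1) : 0 ≤ scl m :=
  div_nonneg (by linarith) (max_pos' m).le

lemma scl_pos {m : ℝ} (h1 : m < 1) : 0 < scl m :=
  div_pos (by linarith) (max_pos' m)

lemma scl_continuous : Continuous scl := by
  unfold scl
  exact Continuous.div (by fun_prop) (by fun_prop) fun m => ne_of_gt (max_pos' m)

/-- The collapse map from the cube to the sphere. -/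
noncomputable def qmap {i : ℕ} (y : Fin i → I) : Fin (i + 1) → ℝ :=
  Fin.snoc (α := fun _ => ℝ) (scl ‖ctr y‖ • ctr y) (2 * ‖ctr y‖ - 1)

lemma qmap_front {i : ℕ} (y : Fin i → I) :
    (frontPart (qmap y) : Fin i → ℝ) = scl ‖ctr y‖ • ctr y := by
  unfold qmap; rw [frontPart_snoc]

lemma qmap_last {i : ℕ} (y : Fin i → I) : qmap y (Fin.last i) = 2 * ‖ctr y‖ - 1 := by
  unfold qmap; rw [Fin.snoc_last]

lemma fin_ext {i : ℕ} {x y : Fin (i + 1) → ℝ} (h : (frontPart x : Fin i → ℝ) = frontPart y)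
    (h' : x (Fin.last i) = y (Fin.last i)) : x = y := by
  funext j
  exact Fin.lastCases h' (fun j => congrFun h j) j

lemma qmap_continuous {i : ℕ} : Continuous (qmap : (Fin i → I) → Fin (i + 1) → ℝ) := by
  have hc := ctr_continuous (i := i)
  refine continuous_pi fun j => ?_
  refine Fin.lastCases ?_ (fun j => ?_) j
  · simp only [qmap_last]; fun_prop
  · have : (fun y : Fin i → I => qmap y j.castSucc) = fun y => scl ‖ctr y‖ * ctr y j := by
      funext y; exact congrFun (qmap_front y) j
    rw [this]
    exact (scl_continuous.comp hc.norm).mul ((continuous_apply j).comp hc)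

lemma nn_qmap {i : ℕ} (y : Fin i → I) : nn (qmap y) = 1 := by
  unfold nn
  rw [qmap_front, qmap_last, norm_smul, Real.norm_eq_abs, abs_of_nonneg (scl_nonneg (ctr_norm_le y)),
    scl_mul (norm_nonneg _) (ctr_norm_le y)]
  ring

lemma qmap_boundary {i : ℕ} (y : Fin i → I) (h : y ∈ Cube.boundary (Fin i)) :
    qmap y = Fin.snoc (α := fun _ => ℝ) 0 1 := by
  apply fin_ext
  · rw [qmap_front, ctr_boundary y h, frontPart_snoc]; simp [scl]
  · rw [qmap_last, ctr_boundary y h, Fin.snoc_last]; norm_num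

lemma qmap_inj {i : ℕ} (hi : 0 < i) (y y' : Fin i → I) (h : qmap y = qmap y') :
    y = y' ∨ (y ∈ Cube.boundary (Fin i) ∧ y' ∈ Cube.boundary (Fin i)) := by
  have hm : ‖ctr y‖ = ‖ctr y'‖ := by
    have := congrFun h (Fin.last i)
    rw [qmap_last, qmap_last] at this; linarith
  rcases (ctr_norm_le y).eq_or_lt with h1 | h1
  · exact Or.inr ⟨ctr_boundary' hi y h1, ctr_boundary' hi y' (hm ▸ h1)⟩
  · left
    apply ctr_injective
    have h2 : (frontPart (qmap y) : Fin i → ℝ) = frontPart (qmap y') := by rw [h]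
    rw [qmap_front, qmap_front, ← hm] at h2
    exact smul_right_injective _ (scl_pos h1).ne' h2

lemma qmap_surj {i : ℕ} (hi : 0 < i) (x : Fin (i + 1) → ℝ) (h : nn x = 1) : ∃ y, qmap y = x := by
  set s := x (Fin.last i) with hs
  set a : Fin i → ℝ := frontPart x with ha
  have hx : ‖a‖ + |s| = 1 := h
  have hs1 : |s| ≤ 1 := by have := norm_nonneg a; linarith
  rw [abs_le] at hs1
  set m := (1 + s) / 2 with hm
  rcases hs1.2.eq_or_lt with h1 | h1
  · have ha0 : a = 0 := by
      rw [h1] at hx; simp at hx; exact hx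
    refine ⟨fun _ => 0, ?_⟩
    rw [qmap_boundary _ ⟨⟨0, hi⟩, Or.inl rfl⟩]
    apply fin_ext
    · rw [frontPart_snoc, ← ha, ha0]
    · rw [Fin.snoc_last, ← hs, h1]
  · have hm1 : m < 1 := by linarith
    have hm0 : 0 ≤ m := by linarith [hs1.1]
    have hsm : 2 * m - 1 = s := by rw [hm]; ring
    have hn : ‖(scl m)⁻¹ • a‖ = m := by
      rw [norm_smul, norm_inv, Real.norm_eq_abs, abs_of_pos (scl_pos hm1), inv_mul_eq_iff_eq_mul₀
        (scl_pos hm1).ne', scl_mul hm0 hm1.le, hsm]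
      linarith
    obtain ⟨y, hy⟩ := ctr_surj ((scl m)⁻¹ • a) (by rw [hn]; exact hm1.le)
    refine ⟨y, ?_⟩
    apply fin_ext
    · rw [qmap_front, hy, hn, smul_smul, mul_inv_cancel₀ (scl_pos hm1).ne', one_smul]
    · rw [qmap_last, hy, hn, hsm]

lemma disc_ext_pos {X : Type*} [TopologicalSpace X] {i : ℕ} (hi : 0 < i)
    (hX : ∀ x : X, Subsingleton (HomotopyGroup (Fin i) X x))
    (g : (Fin (i + 1) → ℝ) → X) (hg : ContinuousOn g {0}ᶜ) :
    ∃ f : (Fin (i + 1) → ℝ) → X, Continuous f ∧ ∀ x, nn x = 1 → f x = g x := by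
  set p : Fin (i + 1) → ℝ := Fin.snoc (α := fun _ => ℝ) 0 1 with hp
  have hq0 : ∀ y : Fin i → I, qmap y ∈ ({0}ᶜ : Set (Fin (i + 1) → ℝ)) := by
    intro y h0
    have := nn_qmap y
    rw [h0, nn_zero] at this
    norm_num at this
  let L : GenLoop (Fin i) X (g p) := ⟨⟨fun y => g (qmap y),
    hg.comp_continuous qmap_continuous hq0⟩, fun y hy => by
      change g (qmap y) = g p
      rw [qmap_boundary y hy]⟩
  have hL : GenLoop.Homotopic L GenLoop.const := by
    have := (hX (g p)).elim (Quotient.mk _ L) (Quotient.mk _ GenLoop.const)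
    exact Quotient.exact this
  obtain ⟨H⟩ := hL
  have H0 : ∀ y, H (0, y) = g (qmap y) := fun y => H.apply_zero y
  have H1 : ∀ y, H (1, y) = g p := fun y => H.apply_one y
  have Hb : ∀ t y, y ∈ Cube.boundary (Fin i) → H (t, y) = g p := fun t y hy => by
    rw [H.eq_fst t hy]
    exact L.2 y hy
  let D := {x : Fin (i + 1) → ℝ // nn x ≤ 1}
  have hQn : ∀ z : I × (Fin i → I), nn ((1 - (z.1 : ℝ)) • qmap z.2) = 1 - (z.1 : ℝ) := by
    intro z
    rw [nn_smul, nn_qmap, mul_one, abs_of_nonneg (by linarith [z.1.2.2])]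
  let Q : I × (Fin i → I) → D := fun z => ⟨(1 - (z.1 : ℝ)) • qmap z.2, by
    rw [hQn]; linarith [z.1.2.1]⟩
  have hQc : Continuous Q := by
    refine Continuous.subtype_mk ?_ _
    have h1 : Continuous fun z : I × (Fin i → I) => (1 - (z.1 : ℝ)) := by fun_prop
    exact h1.smul (qmap_continuous.comp continuous_snd)
  have hQs : Function.Surjective Q := by
    rintro ⟨d, hd⟩
    by_cases h0 : nn d = 0
    · refine ⟨(1, fun _ => 0), ?_⟩
      apply Subtype.ext
      simp [Q, nn_eq_zero h0]
    · obtain ⟨y, hy⟩ := qmap_surj hi ((nn d)⁻¹ • d) (by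
        rw [nn_smul, abs_of_nonneg (inv_nonneg.2 (nn_nonneg d)), inv_mul_cancel₀ h0])
      refine ⟨(⟨1 - nn d, by constructor <;> linarith [nn_nonneg d]⟩, y), ?_⟩
      apply Subtype.ext
      simp only [Q, hy]
      rw [smul_smul]
      simp [h0]
  have hquot : Topology.IsQuotientMap Q := hQc.isClosedMap.isQuotientMap hQc hQs
  have hfib : ∀ z z', Q z = Q z' → H z = H z' := by
    rintro ⟨t, y⟩ ⟨t', y'⟩ h
    have h' := congrArg Subtype.val h
    have ht : t = t' := by
      have := congrArg nn h'
      rw [hQn, hQn] at this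
      apply Subtype.ext
      simp only at this
      linarith
    subst ht
    by_cases h1 : (t : ℝ) = 1
    · have : t = 1 := Subtype.ext h1
      rw [this, H1, H1]
    · have hq : qmap y = qmap y' := by
        have h2 : (1 - (t : ℝ)) • qmap y = (1 - (t : ℝ)) • qmap y' := h'
        exact smul_right_injective _ (sub_ne_zero.2 (Ne.symm h1)) h2
      rcases qmap_inj hi y y' hq with h3 | ⟨h3, h4⟩
      · rw [h3]
      · rw [Hb _ _ h3, Hb _ _ h4]
  choose sec hsec using hQs
  have hF : ∀ z, H (sec (Q z)) = H z := fun z => hfib _ _ (hsec _)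
  have hFc : Continuous (fun d => H (sec d)) := by
    rw [hquot.continuous_iff]
    have : (fun d => H (sec d)) ∘ Q = H := funext hF
    rw [this]
    exact H.continuous
  have hr : ∀ x : Fin (i + 1) → ℝ, nn ((max 1 (nn x))⁻¹ • x) ≤ 1 := by
    intro x
    have h0 : 0 < max 1 (nn x) := lt_of_lt_of_le one_pos (le_max_left _ _)
    rw [nn_smul, abs_of_pos (inv_pos.2 h0), inv_mul_le_iff₀ h0, mul_one]
    exact le_max_right _ _
  refine ⟨fun x => H (sec ⟨(max 1 (nn x))⁻¹ • x, hr x⟩), ?_, ?_⟩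
  · refine hFc.comp (Continuous.subtype_mk ?_ _)
    have h1 : Continuous fun x : Fin (i + 1) → ℝ => (max 1 (nn x))⁻¹ :=
      Continuous.inv₀ (continuous_const.max nn_continuous)
        fun x => (lt_of_lt_of_le one_pos (le_max_left _ _)).ne'
    exact h1.smul continuous_id
  · intro x hx
    obtain ⟨y, hy⟩ := qmap_surj hi x hx
    have : (⟨(max 1 (nn x))⁻¹ • x, hr x⟩ : D) = Q (0, y) := by
      apply Subtype.ext
      simp [Q, hy, hx]
    simp only [this]
    rw [hF, H0, hy]

lemma disc_ext {X : Type*} [TopologicalSpace X] {i : ℕ}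
    (hX : ∀ x : X, Subsingleton (HomotopyGroup (Fin i) X x))
    (g : (Fin (i + 1) → ℝ) → X) (hg : ContinuousOn g {0}ᶜ) :
    ∃ f : (Fin (i + 1) → ℝ) → X, Continuous f ∧ ∀ x, nn x = 1 → f x = g x := by
  rcases Nat.eq_zero_or_pos i with rfl | hi
  · have : Subsingleton (ZerothHomotopy X) := by
      have := hX (g 0)
      exact (HomotopyGroup.pi0EquivZerothHomotopy (X := X) (x := g 0)).symm.subsingleton
    have hj : Joined (g (fun _ => -1)) (g (fun _ => 1)) :=
      Quotient.exact (this.elim (Quotient.mk _ _) (Quotient.mk _ _))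
    obtain ⟨γ⟩ := hj
    refine ⟨fun x => γ.extend ((x 0 + 1) / 2), ?_, ?_⟩
    · exact γ.continuous_extend.comp (by fun_prop)
    · intro x hx
      have hx' : |x 0| = 1 := by
        have h0 : ‖(frontPart x : Fin 0 → ℝ)‖ = 0 := by
          rw [norm_eq_zero]; exact Subsingleton.elim _ _
        unfold nn at hx
        rw [h0, zero_add] at hx
        exact hx
      rcases eq_or_eq_neg_of_abs_eq hx' with h | h
      · have : x = fun _ => 1 := by funext j; rw [fin01 j, h]
        simp [this]
      · have : x = fun _ => -1 := by funext j; rw [fin01 j, h]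
        simp [this]
  · exact disc_ext_pos hi hX g hg

lemma equivariant_map {X : Type*} [TopologicalSpace X] [Nonempty X] (R : X → X)
    (hR : Continuous R) (hRR : ∀ p, R (R p) = p) (n : ℕ)
    (hX : ∀ i < n, ∀ x : X, Subsingleton (HomotopyGroup (Fin i) X x)) :
    ∃ g : (Fin (n + 1) → ℝ) → X, ContinuousOn g {0}ᶜ ∧ ∀ x, x ≠ 0 → g (-x) = R (g x) := by
  induction n with
  | zero =>
    obtain ⟨p⟩ := ‹Nonempty X›
    refine ⟨fun x => if 0 < x 0 then p else R p, ?_, ?_⟩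
    · rw [IsOpen.continuousOn_iff isOpen_compl_singleton]
      intro x hx
      have hx0 : x 0 ≠ 0 := fun h => hx (funext fun j => by rw [fin01 j, h]; rfl)
      rcases lt_or_gt_of_ne hx0 with h | h
      · have : ∀ᶠ y in nhds x, R p = (if 0 < y 0 then p else R p) := by
          filter_upwards [(continuous_apply (0 : Fin 1)).continuousAt.eventually_lt
            continuousAt_const h] with y hy
          simp [not_lt.2 hy.le]
        exact continuousAt_const.congr this
      · have : ∀ᶠ y in nhds x, p = (if 0 < y 0 then p else R p) := by
          filter_upwards [continuousAt_const.eventually_lt 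
            (continuous_apply (0 : Fin 1)).continuousAt h] with y hy
          simp [hy]
        exact continuousAt_const.congr this
    · intro x hx
      have hx0 : x 0 ≠ 0 := fun h => hx (funext fun j => by rw [fin01 j, h]; rfl)
      rcases lt_or_gt_of_ne hx0 with h | h
      · simp [h, not_lt.2 h.le, hRR]
      · simp [h, not_lt.2 h.le]
  | succ n ih =>
    obtain ⟨g, hg, hgR⟩ := ih fun i hi => hX i (hi.trans n.lt_succ_self)
    obtain ⟨f, hf, hfg⟩ := disc_ext (hX n n.lt_succ_self) g hg
    let M : (Fin (n + 1 + 1) → ℝ) → ℝ := fun x => nn (frontPart x : Fin (n + 1) → ℝ) + |x (Fin.last _)|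
    let N : (Fin (n + 1 + 1) → ℝ) → Fin (n + 1) → ℝ := fun x => (M x)⁻¹ • (frontPart x : Fin (n + 1) → ℝ)
    have hfront : Continuous (fun x : Fin (n + 1 + 1) → ℝ => (frontPart x : Fin (n + 1) → ℝ)) :=
      continuous_pi fun j => continuous_apply _
    have hMc : Continuous M := by
      have := (nn_continuous (i := n)).comp hfront
      exact this.add (by fun_prop)
    have hM0 : ∀ x, x ≠ 0 → M x ≠ 0 := by
      intro x hx h0
      have h1 := nn_nonneg (frontPart x : Fin (n + 1) → ℝ)
      have h2 := abs_nonneg (x (Fin.last _))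
      have h3 : nn (frontPart x : Fin (n + 1) → ℝ) = 0 := by simp only [M] at h0; linarith
      have h4 : |x (Fin.last _)| = 0 := by simp only [M] at h0; linarith
      exact hx (fin_ext (nn_eq_zero h3) (abs_eq_zero.1 h4))
    have hNc : ContinuousOn N {0}ᶜ :=
      ContinuousOn.smul (hMc.continuousOn.inv₀ fun x hx => hM0 x hx) hfront.continuousOn
    have hMneg : ∀ x, M (-x) = M x := by
      intro x
      have : (frontPart (-x) : Fin (n + 1) → ℝ) = (-1 : ℝ) • (frontPart x : Fin (n + 1) → ℝ) := by
        funext j; simp [frontPart]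
      simp only [M]
      rw [this, nn_smul]
      simp
    have hNneg : ∀ x, N (-x) = -N x := by
      intro x
      have : (frontPart (-x) : Fin (n + 1) → ℝ) = - (frontPart x : Fin (n + 1) → ℝ) := rfl
      simp only [N]
      rw [hMneg, this, smul_neg]
    have hN1 : ∀ x, x ≠ 0 → x (Fin.last _) = 0 → nn (N x) = 1 := by
      intro x hx h0
      have h1 := hM0 x hx
      have h2 : M x = nn (frontPart x : Fin (n + 1) → ℝ) := by simp [M, h0]
      simp only [N]
      rw [nn_smul, ← h2, abs_of_nonneg, inv_mul_cancel₀ h1]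
      rw [h2]; exact inv_nonneg.2 (nn_nonneg _)
    have hedge : ∀ x, x ≠ 0 → x (Fin.last _) = 0 → f (N x) = R (f (-N x)) := by
      intro x hx h0
      have h1 := hN1 x hx h0
      have h2 : nn (-N x) = 1 := by rw [← hNneg]; exact hN1 _ (neg_ne_zero.2 hx) (by simp [h0])
      have h3 : N x ≠ 0 := fun h => by rw [h, nn_zero] at h1; norm_num at h1
      rw [hfg _ h1, hfg _ h2, hgR _ h3, hRR]
    refine ⟨fun x => if 0 ≤ x (Fin.last _) then f (N x) else R (f (-N x)), ?_, ?_⟩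
    · have hsub : ∀ t : Set (Fin (n + 1 + 1) → ℝ), ({0}ᶜ ∩ t) ⊆ {0}ᶜ := fun t => Set.inter_subset_left
      refine ContinuousOn.if ?_ ?_ ?_
      · rintro x ⟨hx, hx'⟩
        have := frontier_le_subset_eq continuous_const (continuous_apply (Fin.last _)) hx'
        exact hedge x hx this.symm
      · exact (hf.comp_continuousOn hNc).mono (hsub _)
      · exact (hR.comp_continuousOn (hf.comp_continuousOn hNc.neg)).mono (hsub _)
    · intro x hx
      simp only [hNneg, neg_neg, Pi.neg_apply]
      rcases lt_trichotomy (x (Fin.last _)) 0 with h | h | h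
      · simp [h.le, not_le.2 h, hRR]
      · have := hedge x hx h
        simp [h, this, hRR]
      · simp [h.le, h]

end Extension

section Chains

open Finsupp

/-- Mod 2 chains of unordered simplices. -/
abbrev Ch (A : Type*) := Multiset A →₀ ZMod 2

/-- A simplex as a chain. -/
noncomputable abbrev sg {A : Type*} (s : Multiset A) : Ch A := Finsupp.single s 1

/-- Chains supported in a set of simplices. -/
abbrev Sp {A : Type*} (P : Set (Multiset A)) : Submodule (ZMod 2) (Ch A) :=
  Finsupp.supported (ZMod 2) (ZMod 2) P

lemma ch_double {A : Type*} (c : Ch A) : c + c = 0 := by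
  ext s; exact CharTwo.add_self_eq_zero _

lemma sg_mem {A : Type*} {P : Set (Multiset A)} {s : Multiset A} (h : s ∈ P) : sg s ∈ Sp P :=
  Finsupp.single_mem_supported _ _ h

lemma sp_induction {A : Type*} {P : Set (Multiset A)} {p : Ch A → Prop} (h0 : p 0)
    (hadd : ∀ x y, p x → p y → p (x + y)) (hs : ∀ s ∈ P, p (sg s)) {c : Ch A} (hc : c ∈ Sp P) :
    p c := by
  rw [Sp, Finsupp.supported_eq_span_single] at hc
  refine Submodule.span_induction ?_ h0 (fun x y _ _ => hadd x y) ?_ hc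
  · rintro _ ⟨s, hs', rfl⟩; exact hs s hs'
  · intro a x _ hx
    have : a = 0 ∨ a = 1 := by revert a; decide
    rcases this with rfl | rfl
    · simpa using h0
    · simpa using hx

lemma sp_lin {A : Type*} {B : Type*} [AddCommGroup B] [Module (ZMod 2) B]
    {P : Set (Multiset A)} {Q : Submodule (ZMod 2) B}
    (L : Ch A →ₗ[ZMod 2] B) (h : ∀ s ∈ P, L (sg s) ∈ Q) {c : Ch A} (hc : c ∈ Sp P) : L c ∈ Q :=
  sp_induction (p := fun c => L c ∈ Q) (by simp) (fun x y hx hy => by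
    simpa using Q.add_mem hx hy) h hc

lemma sp_eq {A : Type*} {B : Type*} [AddCommGroup B] [Module (ZMod 2) B]
    {P : Set (Multiset A)} (L L' : Ch A →ₗ[ZMod 2] B) (h : ∀ s ∈ P, L (sg s) = L' (sg s))
    {c : Ch A} (hc : c ∈ Sp P) : L c = L' c :=
  sp_induction (p := fun c => L c = L' c) (by simp) (fun x y hx hy => by
    simp [hx, hy]) h hc

lemma ch_eq {A : Type*} {B : Type*} [AddCommGroup B] [Module (ZMod 2) B]
    (L L' : Ch A →ₗ[ZMod 2] B) (h : ∀ s, L (sg s) = L' (sg s)) (c : Ch A) : L c = L' c := by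
  refine sp_eq (P := Set.univ) L L' (fun s _ => h s) ?_
  simp [Sp, Finsupp.supported_univ]

lemma sp_mono {A : Type*} {P Q : Set (Multiset A)} (h : P ⊆ Q) {c : Ch A} (hc : c ∈ Sp P) :
    c ∈ Sp Q := Finsupp.supported_mono h hc

/-- Extend linearly. -/
noncomputable abbrev ext1 {A : Type*} {B : Type*} [AddCommGroup B] [Module (ZMod 2) B]
    (f : Multiset A → B) : Ch A →ₗ[ZMod 2] B := Finsupp.linearCombination (ZMod 2) f

@[simp] lemma ext1_sg {A : Type*} {B : Type*} [AddCommGroup B] [Module (ZMod 2) B]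
    (f : Multiset A → B) (s : Multiset A) : ext1 f (sg s) = f s := by
  simp [ext1, sg]

/-- Cone. -/
noncomputable def cone {A : Type*} (a : A) : Ch A →ₗ[ZMod 2] Ch A := ext1 fun s => sg (a ::ₘ s)

@[simp] lemma cone_sg {A : Type*} (a : A) (s : Multiset A) : cone a (sg s) = sg (a ::ₘ s) := by
  unfold cone; rw [ext1_sg]

/-- Push-forward. -/
noncomputable def mp {A B : Type*} (f : A → B) : Ch A →ₗ[ZMod 2] Ch B :=
  ext1 fun s => sg (s.map f)

@[simp] lemma mp_sg {A B : Type*} (f : A → B) (s : Multiset A) : mp f (sg s) = sg (s.map f) := by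
  unfold mp; rw [ext1_sg]

lemma mp_mp {A B C : Type*} (f : A → B) (g : B → C) (c : Ch A) : mp g (mp f c) = mp (g ∘ f) c :=
  ch_eq (mp g ∘ₗ mp f) (mp (g ∘ f)) (fun s => by simp) c

lemma mp_cone {A B : Type*} (f : A → B) (a : A) (c : Ch A) :
    mp f (cone a c) = cone (f a) (mp f c) :=
  ch_eq (mp f ∘ₗ cone a) (cone (f a) ∘ₗ mp f) (fun s => by simp) c

open Classical in
/-- Boundary. -/
noncomputable def bd {A : Type*} : Ch A →ₗ[ZMod 2] Ch A :=
  ext1 fun s => (s.map fun a => sg (s.erase a)).sum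

@[simp] lemma bd_zero {A : Type*} : bd (sg (0 : Multiset A)) = 0 := by
  unfold bd; rw [ext1_sg]; simp

lemma bd_cons {A : Type*} (a : A) (s : Multiset A) :
    bd (sg (a ::ₘ s)) = sg s + cone a (bd (sg s)) := by
  classical
  have h : ∀ t : Multiset A, bd (sg t) = (t.map fun b => sg (t.erase b)).sum := by
    intro t
    unfold bd; rw [ext1_sg]
  rw [h, h, Multiset.map_cons, Multiset.sum_cons, Multiset.erase_cons_head, map_multiset_sum,
    Multiset.map_map]
  congr 2
  refine Multiset.map_congr rfl fun b hb => ?_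
  simp only [Function.comp, cone_sg]
  by_cases hab : b = a
  · subst hab
    rw [Multiset.erase_cons_head, Multiset.cons_erase hb]
  · rw [Multiset.erase_cons_tail _ (fun h => hab h.symm)]

lemma bd_cone {A : Type*} (a : A) (c : Ch A) : bd (cone a c) = c + cone a (bd c) :=
  ch_eq (bd ∘ₗ cone a) (LinearMap.id + cone a ∘ₗ bd) (fun s => by simp [bd_cons]) c

lemma bd_bd {A : Type*} (c : Ch A) : bd (bd c) = 0 := by
  refine ch_eq (bd ∘ₗ bd) 0 (fun s => ?_) c
  induction s using Multiset.induction with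
  | empty => simp
  | cons a s ih =>
    simp only [LinearMap.comp_apply, LinearMap.zero_apply] at ih ⊢
    rw [bd_cons, map_add, bd_cone, ih, map_zero, add_zero, ch_double]

lemma bd_mp {A B : Type*} (f : A → B) (c : Ch A) : bd (mp f c) = mp f (bd c) := by
  refine ch_eq (bd ∘ₗ mp f) (mp f ∘ₗ bd) (fun s => ?_) c
  induction s using Multiset.induction with
  | empty => simp
  | cons a s ih =>
    simp only [LinearMap.comp_apply, mp_sg, Multiset.map_cons] at ih ⊢
    rw [bd_cons, bd_cons, map_add, mp_cone, ih, mp_sg]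

/-- Simplices of a given cardinality. -/
abbrev Cd (A : Type*) (k : ℕ) : Set (Multiset A) := {s | s.card = k}

/-- A family of simplices is hereditary. -/
def Hered {A : Type*} (P : Set (Multiset A)) : Prop := ∀ s ∈ P, ∀ t ≤ s, t ∈ P

lemma bd_sg_mem {A : Type*} (s : Multiset A) (k : ℕ) (hk : s.card = k + 1) :
    bd (sg s) ∈ Sp {t | t ≤ s ∧ t.card = k} := by
  classical
  have h : bd (sg s) = (s.map fun b => sg (s.erase b)).sum := by
    unfold bd; rw [ext1_sg]
  rw [h]
  refine multiset_sum_mem _ fun c hc => ?_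
  obtain ⟨b, hb, rfl⟩ := Multiset.mem_map.1 hc
  refine sg_mem ⟨Multiset.erase_le _ _, ?_⟩
  rw [Multiset.card_erase_of_mem hb, hk]; rfl

lemma bd_mem {A : Type*} {P : Set (Multiset A)} (hP : Hered P) {k : ℕ} {c : Ch A}
    (hc : c ∈ Sp (P ∩ Cd A (k + 1))) : bd c ∈ Sp (P ∩ Cd A k) := by
  refine sp_lin bd (fun s hs => ?_) hc
  exact sp_mono (P := {t | t ≤ s ∧ t.card = k}) (Q := P ∩ Cd A k)
    (fun t ht => ⟨hP s hs.1 t ht.1, ht.2⟩) (bd_sg_mem s k hs.2)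

lemma bd_mem' {A : Type*} {P : Set (Multiset A)} (hP : Hered P) {c : Ch A}
    (hc : c ∈ Sp P) : bd c ∈ Sp P := by
  refine sp_lin bd (fun s hs => ?_) hc
  rcases hk : s.card with _ | k
  · rw [Multiset.card_eq_zero.1 hk]; simp
  · exact sp_mono (fun t ht => hP s hs t ht.1) (bd_sg_mem s k hk)

lemma bd_card {A : Type*} {k : ℕ} {c : Ch A}
    (hc : c ∈ Sp (Cd A (k + 1))) : bd c ∈ Sp (Cd A k) := by
  refine sp_lin bd (fun s hs => ?_) hc
  exact sp_mono (fun t ht => ht.2) (bd_sg_mem s k hs)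

lemma cone_mem {A : Type*} {P Q : Set (Multiset A)} (a : A) (h : ∀ s ∈ P, a ::ₘ s ∈ Q) {c : Ch A}
    (hc : c ∈ Sp P) : cone a c ∈ Sp Q :=
  sp_lin (cone a) (fun s hs => by rw [cone_sg]; exact sg_mem (h s hs)) hc

lemma mp_mem {A B : Type*} {P : Set (Multiset A)} {Q : Set (Multiset B)} (f : A → B)
    (h : ∀ s ∈ P, s.map f ∈ Q) {c : Ch A} (hc : c ∈ Sp P) : mp f c ∈ Sp Q :=
  sp_lin (mp f) (fun s hs => by rw [mp_sg]; exact sg_mem (h s hs)) hc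

lemma mp_congr {A B : Type*} {P : Set (Multiset A)} (f g : A → B)
    (h : ∀ s ∈ P, ∀ a ∈ s, f a = g a) {c : Ch A} (hc : c ∈ Sp P) : mp f c = mp g c :=
  sp_eq (mp f) (mp g) (fun s hs => by
    rw [mp_sg, mp_sg, Multiset.map_congr rfl (h s hs)]) hc

end Chains

section Labels

variable {N : ℕ}

/-- Alternating lists of signed labels. -/
def altL : Bool → List (Fin N × Bool) → Prop
  | _, [] => True
  | b, a :: l => a.2 = b ∧ (∀ x ∈ l, a.1 < x.1) ∧ altL (!b) l

/-- Alternating simplices of signed labels. -/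
def Alt (b : Bool) (m : Multiset (Fin N × Bool)) : Prop :=
  ∃ l : List (Fin N × Bool), (l : Multiset (Fin N × Bool)) = m ∧ altL b l

/-- Antipode on labels. -/
def tau (a : Fin N × Bool) : Fin N × Bool := (a.1, !a.2)

lemma alt_cons {b : Bool} {a : Fin N × Bool} {m : Multiset (Fin N × Bool)}
    (h : ∀ x ∈ m, a.1 < x.1) : Alt b (a ::ₘ m) ↔ a.2 = b ∧ Alt (!b) m := by
  constructor
  · rintro ⟨l, hl, hal⟩
    rcases l with _ | ⟨a', l⟩
    · exact absurd hl.symm (Multiset.cons_ne_zero)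
    · have haa : a = a' := by
        by_contra hne
        have h1 : a ∈ ((a' :: l : List _) : Multiset (Fin N × Bool)) := by rw [hl]; simp
        have h2 : a' ∈ a ::ₘ m := by rw [← hl]; simp
        rw [Multiset.mem_coe, List.mem_cons] at h1
        rw [Multiset.mem_cons] at h2
        have h3 := hal.2.1 a (h1.resolve_left hne)
        have h4 := h a' (h2.resolve_left (Ne.symm hne))
        exact lt_asymm h3 h4
      subst haa
      rw [← Multiset.cons_coe, Multiset.cons_inj_right] at hl
      exact ⟨hal.1, l, hl, hal.2.2⟩
  · rintro ⟨ha, l, rfl, hl⟩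
    exact ⟨a :: l, rfl, ha, fun x hx => h x (by simpa using hx), hl⟩

lemma altL_nodup {b : Bool} {l : List (Fin N × Bool)} (h : altL b l) : (l.map Prod.fst).Nodup := by
  induction l generalizing b with
  | nil => simp
  | cons a l ih =>
    rw [List.map_cons, List.nodup_cons]
    refine ⟨fun hm => ?_, ih h.2.2⟩
    obtain ⟨x, hx, hxa⟩ := List.mem_map.1 hm
    exact absurd (h.2.1 x hx) (by rw [hxa]; exact lt_irrefl _)

lemma alt_nodup {b : Bool} {m : Multiset (Fin N × Bool)} (h : Alt b m) : (m.map Prod.fst).Nodup := by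
  obtain ⟨l, rfl, hl⟩ := h
  exact altL_nodup hl

lemma alt_card {b : Bool} {m : Multiset (Fin N × Bool)} (h : Alt b m) : m.card ≤ N := by
  have := alt_nodup h
  have h2 := Finset.card_le_univ (⟨_, this⟩ : Finset (Fin N))
  simpa using h2

lemma altL_tau {b : Bool} {l : List (Fin N × Bool)} : altL b (l.map tau) ↔ altL (!b) l := by
  induction l generalizing b with
  | nil => simp [altL]
  | cons a l ih =>
    simp only [List.map_cons, altL, ih]
    refine and_congr ?_ (and_congr ?_ Iff.rfl)
    · simp [tau]
    · simp only [List.mem_map, forall_exists_index, and_imp, forall_apply_eq_imp_iff₂, tau]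

lemma tau_tau (a : Fin N × Bool) : tau (tau a) = a := by simp [tau]

lemma alt_tau' {b : Bool} {m : Multiset (Fin N × Bool)} (h : Alt b m) : Alt (!b) (m.map tau) := by
  obtain ⟨l, rfl, hl⟩ := h
  exact ⟨l.map tau, by simp, by rw [altL_tau]; simpa using hl⟩

lemma alt_tau {b : Bool} {m : Multiset (Fin N × Bool)} : Alt b (m.map tau) ↔ Alt (!b) m := by
  constructor
  · intro h
    have := alt_tau' h
    rwa [Multiset.map_map, show (tau ∘ tau : Fin N × Bool → _) = id from funext tau_tau,
      Multiset.map_id] at this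
  · intro h
    have := alt_tau' h
    simpa using this

open Classical in
/-- Indicator of alternating simplices. -/
noncomputable def al (b : Bool) (m : Multiset (Fin N × Bool)) : ZMod 2 := if Alt b m then 1 else 0

/-- Linear extension of `al`. -/
noncomputable def alph (b : Bool) : Ch (Fin N × Bool) →ₗ[ZMod 2] ZMod 2 := ext1 (al b)

@[simp] lemma alph_sg (b : Bool) (m : Multiset (Fin N × Bool)) : alph b (sg m) = al b m := by
  unfold alph; rw [ext1_sg]

/-- No two opposite labels. -/
def NoOpp (N : ℕ) : Set (Multiset (Fin N × Bool)) := {m | ∀ a ∈ m, ∀ b ∈ m, a.1 = b.1 → a = b}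

lemma al_zero (b : Bool) : al b (0 : Multiset (Fin N × Bool)) = 1 := by
  unfold al; rw [if_pos]; exact ⟨[], rfl, trivial⟩

lemma al_cons {b : Bool} {a : Fin N × Bool} {m : Multiset (Fin N × Bool)}
    (h : ∀ x ∈ m, a.1 < x.1) : al b (a ::ₘ m) = if a.2 = b then al (!b) m else 0 := by
  have := alt_cons (b := b) h
  unfold al
  by_cases h1 : Alt b (a ::ₘ m)
  · rw [if_pos h1, if_pos (this.1 h1).1, if_pos (this.1 h1).2]
  · rw [if_neg h1]
    split_ifs with h2 h3
    · exact absurd (this.2 ⟨h2, h3⟩) h1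
    · rfl
    · rfl

lemma al_dup {b : Bool} {a : Fin N × Bool} {m : Multiset (Fin N × Bool)} :
    al b (a ::ₘ a ::ₘ m) = 0 := by
  unfold al
  rw [if_neg]
  intro h
  have := alt_nodup h
  simp at this

lemma z2_double (x : ZMod 2) : x + x = 0 := CharTwo.add_self_eq_zero _

lemma al_bd (k : ℕ) (b : Bool) (m : Multiset (Fin N × Bool)) (hk : m.card = k) (hm : m ∈ NoOpp N) :
    alph b (bd (sg m)) = al b m + al (!b) m := by
  induction k generalizing b m with
  | zero =>
    rw [Multiset.card_eq_zero.1 hk, bd_zero, map_zero, al_zero, al_zero, z2_double]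
  | succ k ih =>
    classical
    have hne : m.toFinset.Nonempty := by
      rw [Multiset.toFinset_nonempty]; rintro rfl; simp at hk
    obtain ⟨a, ham, hmin⟩ := Finset.exists_min_image m.toFinset Prod.fst hne
    rw [Multiset.mem_toFinset] at ham
    obtain ⟨m', rfl⟩ := Multiset.exists_cons_of_mem ham
    have hm' : m' ∈ NoOpp N := fun x hx y hy => 
      hm x (Multiset.mem_cons_of_mem hx) y (Multiset.mem_cons_of_mem hy)
    rw [bd_cons, map_add, alph_sg]
    by_cases ha : a ∈ m'
    · obtain ⟨m'', rfl⟩ := Multiset.exists_cons_of_mem ha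
      have : ∀ c, alph b (cone a (cone a c)) = 0 := by
        intro c
        exact ch_eq (alph b ∘ₗ cone a ∘ₗ cone a) 0 (fun s => by simp [al_dup]) c
      rw [bd_cons, map_add, map_add, this, cone_sg, alph_sg, al_dup, al_dup, add_zero, z2_double,
        add_zero]
    · have hlt : ∀ x ∈ m', a.1 < x.1 := by
        intro x hx
        refine lt_of_le_of_ne (hmin x (by simp [hx])) fun h => ?_
        exact ha (hm a ham x (Multiset.mem_cons_of_mem hx) h ▸ hx)
      have hcone : alph b (cone a (bd (sg m'))) = if a.2 = b then alph (!b) (bd (sg m')) else 0 := by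
        have hsp : bd (sg m') ∈ Sp {s : Multiset (Fin N × Bool) | ∀ x ∈ s, a.1 < x.1} := by
          refine bd_mem' ?_ (sg_mem hlt)
          intro s hs t ht x hx
          exact hs x (Multiset.mem_of_le ht hx)
        have := sp_eq (alph b ∘ₗ cone a) (if a.2 = b then alph (!b) else 0) (fun s hs => by
          simp only [LinearMap.comp_apply, cone_sg, alph_sg]
          rw [al_cons hs]
          split_ifs <;> simp) hsp
        rw [LinearMap.comp_apply] at this
        rw [this]
        split_ifs <;> simp
      have hcard : m'.card = k := by simpa using hk
      rw [hcone, ih (!b) m' hcard hm', al_cons hlt, al_cons hlt]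
      simp only [Bool.not_not]
      have hb : (a.2 = !b) ↔ ¬ (a.2 = b) := by cases a.2 <;> cases b <;> simp
      by_cases h : a.2 = b
      · rw [if_pos h, if_pos h, if_neg (by rw [hb]; simp [h]), add_zero, add_comm (al (!b) m'),
          ← add_assoc, z2_double, zero_add]
      · rw [if_neg h, if_neg h, if_pos (hb.2 h), add_zero, zero_add]

lemma alph_tau (b : Bool) (c : Ch (Fin N × Bool)) : alph b (mp tau c) = alph (!b) c := by
  refine ch_eq (alph b ∘ₗ mp tau) (alph (!b)) (fun s => ?_) c
  simp only [LinearMap.comp_apply, mp_sg, alph_sg]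
  have := alt_tau (b := b) (m := s)
  unfold al
  by_cases h1 : Alt b (s.map tau)
  · rw [if_pos h1, if_pos (this.1 h1)]
  · rw [if_neg h1, if_neg (fun h => h1 (this.2 h))]

lemma alph_bd (b : Bool) {c : Ch (Fin N × Bool)} (hc : c ∈ Sp (NoOpp N)) :
    alph b (bd c) = alph b c + alph b (mp tau c) := by
  rw [alph_tau]
  refine sp_eq (alph b ∘ₗ bd) (alph b + alph (!b)) (fun s hs => ?_) hc
  simp only [LinearMap.comp_apply, LinearMap.add_apply, alph_sg]
  exact al_bd _ b s rfl hs

lemma alph_big (b : Bool) {k : ℕ} (hk : N < k) {c : Ch (Fin N × Bool)} (hc : c ∈ Sp (Cd _ k)) :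
    alph b c = 0 := by
  refine sp_eq (alph b) 0 (fun s hs => ?_) hc
  rw [alph_sg, LinearMap.zero_apply]
  unfold al
  rw [if_neg]
  intro h
  have := alt_card h
  have hs' : s.card = k := hs
  omega

end Labels

section Subdivision

variable {E : Type*} [NormedAddCommGroup E] [NormedSpace ℝ E]
variable {EE : Type*} [NormedAddCommGroup EE] [NormedSpace ℝ EE]

/-- Barycentre. -/
noncomputable def bary (s : Multiset E) : E := ((s.card : ℝ)⁻¹) • s.sum

lemma bary_mem {C : Set E} (hC : Convex ℝ C) {s : Multiset E} (hs : ∀ a ∈ s, a ∈ C) (h0 : s ≠ 0) :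
    bary s ∈ C := by
  induction s using Multiset.induction with
  | empty => exact absurd rfl h0
  | cons a s ih =>
    by_cases h : s = 0
    · subst h
      simpa [bary] using hs a (by simp)
    · have h1 := ih (fun b hb => hs b (Multiset.mem_cons_of_mem hb)) h
      have h2 := hs a (Multiset.mem_cons_self a s)
      have hpos : (0 : ℝ) < s.card := by
        exact_mod_cast Multiset.card_pos.2 h
      have key := hC h2 h1 (a := 1 / ((s.card : ℝ) + 1)) (b := s.card / ((s.card : ℝ) + 1))
        (by positivity) (by positivity) (by field_simp; ring)
      convert key using 1
      unfold bary
      rw [Multiset.card_cons, Multiset.sum_cons, smul_smul, smul_add]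
      push_cast
      congr 2
      · field_simp
      · field_simp

lemma bary_dist {s : Multiset E} {δ : ℝ} (hδ : 0 ≤ δ) (hs : ∀ a ∈ s, ∀ b ∈ s, dist a b ≤ δ) {K : ℕ}
    (hK : s.card ≤ K) {a : E} (ha : a ∈ s) : dist a (bary s) ≤ (1 - 1 / (K : ℝ)) * δ := by
  obtain ⟨t, rfl⟩ := Multiset.exists_cons_of_mem ha
  have hc : (0 : ℝ) < (t.card : ℝ) + 1 := by positivity
  have hsum : ‖(t.map fun b => b - a).sum‖ ≤ t.card * δ := by
    have h1 : ‖(t.map fun b => b - a).sum‖ ≤ ((t.map fun b => b - a).map fun x => ‖x‖).sum :=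
      norm_multiset_sum_le _
    refine h1.trans ?_
    have h2 := Multiset.sum_le_card_nsmul ((t.map fun b => b - a).map fun x => ‖x‖) δ (by
      intro x hx
      simp only [Multiset.mem_map, exists_exists_and_eq_and] at hx
      obtain ⟨b, hb, rfl⟩ := hx
      rw [← dist_eq_norm]
      exact hs b (Multiset.mem_cons_of_mem hb) a ha)
    simpa using h2
  have heq : (t.map fun b => b - a).sum = t.sum - (t.card : ℝ) • a := by
    rw [Multiset.sum_map_sub]
    simp [Nat.cast_smul_eq_nsmul]
  have hb : bary (a ::ₘ t) - a = ((t.card : ℝ) + 1)⁻¹ • (t.map fun b => b - a).sum := by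
    rw [heq]
    unfold bary
    rw [Multiset.card_cons, Multiset.sum_cons]
    push_cast
    have : a = ((t.card : ℝ) + 1)⁻¹ • (((t.card : ℝ) + 1) • a) := by
      rw [smul_smul, inv_mul_cancel₀ hc.ne', one_smul]
    nth_rewrite 2 [this]
    rw [← smul_sub]
    congr 1
    rw [add_smul, one_smul]; abel
  rw [dist_comm, dist_eq_norm, hb, norm_smul, norm_inv, Real.norm_of_nonneg hc.le]
  have hK' : (t.card : ℝ) + 1 ≤ K := by
    rw [Multiset.card_cons] at hK
    exact_mod_cast hK
  calc ((t.card : ℝ) + 1)⁻¹ * ‖(t.map fun b => b - a).sum‖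
      ≤ ((t.card : ℝ) + 1)⁻¹ * (t.card * δ) := by gcongr
    _ = (1 - 1 / ((t.card : ℝ) + 1)) * δ := by field_simp; ring
    _ ≤ (1 - 1 / (K : ℝ)) * δ := by gcongr

/-- Barycentric subdivision. -/
noncomputable def sd : ℕ → Ch E →ₗ[ZMod 2] Ch E
  | 0 => LinearMap.id
  | k + 1 => ext1 fun s => cone (bary s) (sd k (bd (sg s)))

lemma sd_succ (k : ℕ) (s : Multiset E) : sd (k + 1) (sg s) = cone (bary s) (sd k (bd (sg s))) := by
  rw [sd, ext1_sg]

lemma sd_card {k : ℕ} {c : Ch E} (hc : c ∈ Sp (Cd E k)) : sd k c ∈ Sp (Cd E k) := by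
  induction k generalizing c with
  | zero => exact hc
  | succ k ih =>
    refine sp_lin (sd (k + 1)) (fun s hs => ?_) hc
    rw [sd_succ]
    exact cone_mem (P := Cd E k) _ (fun t ht => by
      show Multiset.card _ = _
      rw [Multiset.card_cons, ht]) (ih (bd_card (sg_mem hs)))

lemma bd_sd {k : ℕ} {c : Ch E} (hc : c ∈ Sp (Cd E (k + 1))) :
    bd (sd (k + 1) c) = sd k (bd c) := by
  induction k generalizing c with
  | zero =>
    refine sp_induction (p := fun c => bd (sd (0 + 1) c) = sd 0 (bd c)) (by simp only [map_zero])
      (fun x y hx hy => by simp only [map_add, hx, hy]) (fun s hs => ?_) hc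
    rw [sd_succ, bd_cone, sd, LinearMap.id_apply, bd_bd, map_zero, add_zero]
  | succ k ih =>
    refine sp_induction (p := fun c => bd (sd (k + 1 + 1) c) = sd (k + 1) (bd c))
      (by simp only [map_zero])
      (fun x y hx hy => by simp only [map_add, hx, hy]) (fun s hs => ?_) hc
    rw [sd_succ, bd_cone, ih (bd_card (sg_mem hs)), bd_bd, map_zero, map_zero, add_zero]

lemma sd_mp (f : E → EE) (hf : ∀ s : Multiset E, s ≠ 0 → f (bary s) = bary (s.map f)) (k : ℕ)
    (c : Ch E) : mp f (sd k c) = sd k (mp f c) := by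
  induction k generalizing c with
  | zero => rfl
  | succ k ih =>
    refine ch_eq (mp f ∘ₗ sd (k + 1)) (sd (k + 1) ∘ₗ mp f) (fun s => ?_) c
    simp only [LinearMap.comp_apply]
    rw [mp_sg, sd_succ, sd_succ, mp_cone, ih, ← bd_mp, mp_sg]
    by_cases h : s = 0
    · subst h; simp
    · rw [hf s h]

/-- Simplices contained in a set. -/
abbrev Ins (C : Set E) : Set (Multiset E) := {s | ∀ a ∈ s, a ∈ C}

lemma ins_hered (C : Set E) : Hered (Ins C) := fun _ hs _ ht a ha => hs a (Multiset.mem_of_le ht ha)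

lemma sd_ins {C : Set E} (hC : Convex ℝ C) (k : ℕ) {c : Ch E} (hc : c ∈ Sp (Ins C)) :
    sd k c ∈ Sp (Ins C) := by
  induction k generalizing c with
  | zero => exact hc
  | succ k ih =>
    refine sp_lin (sd (k + 1)) (fun s hs => ?_) hc
    rw [sd_succ]
    by_cases h : s = 0
    · subst h; simp
    · refine cone_mem (P := Ins C) _ (fun t ht => ?_) (ih (bd_mem' (ins_hered C) (sg_mem hs)))
      intro a ha
      rcases Multiset.mem_cons.1 ha with rfl | ha
      · exact bary_mem hC hs h
      · exact ht a ha

/-- Simplices carried by a family. -/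
abbrev Car (𝒞 : Set (Set E)) : Set (Multiset E) := {s | ∃ C ∈ 𝒞, s ∈ Ins C}

lemma car_hered (𝒞 : Set (Set E)) : Hered (Car 𝒞) :=
  fun s ⟨C, h, hs⟩ t ht => ⟨C, h, ins_hered C s hs t ht⟩

lemma sd_car {𝒞 : Set (Set E)} (hC : ∀ C ∈ 𝒞, Convex ℝ C) (k : ℕ) {c : Ch E}
    (hc : c ∈ Sp (Car 𝒞)) : sd k c ∈ Sp (Car 𝒞) := by
  refine sp_lin (sd k) (fun s hs => ?_) hc
  obtain ⟨C, h, hs⟩ := hs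
  exact sp_mono (P := Ins C) (Q := Car 𝒞) (fun t ht => ⟨C, h, ht⟩) (sd_ins (hC C h) k (sg_mem hs))

/-- Simplices of bounded diameter. -/
abbrev Dm (E : Type*) [NormedAddCommGroup E] (δ : ℝ) : Set (Multiset E) :=
  {s | ∀ a ∈ s, ∀ b ∈ s, dist a b ≤ δ}

lemma sp_inter {A : Type*} {P Q : Set (Multiset A)} {c : Ch A} (h1 : c ∈ Sp P) (h2 : c ∈ Sp Q) :
    c ∈ Sp (P ∩ Q) := by
  rw [Sp, Finsupp.supported_inter]; exact ⟨h1, h2⟩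

lemma sd_mesh {δ : ℝ} (hδ : 0 ≤ δ) {K : ℕ} (hK : 1 ≤ K) {k : ℕ} (hk : k ≤ K) {c : Ch E}
    (hc : c ∈ Sp (Dm E δ ∩ Cd E k)) : sd k c ∈ Sp (Dm E ((1 - 1 / (K : ℝ)) * δ)) := by
  have hK0 : 0 ≤ 1 - 1 / (K : ℝ) := by
    have : (1 : ℝ) ≤ K := by exact_mod_cast hK
    rw [sub_nonneg, div_le_one (by linarith)]; exact this
  induction k generalizing c with
  | zero =>
    refine sp_mono (fun s hs => ?_) hc
    rw [Multiset.card_eq_zero.1 hs.2]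
    intro a ha; simp at ha
  | succ k ih =>
    refine sp_lin (sd (k + 1)) (fun s hs => ?_) hc
    rw [sd_succ]
    have hh : Hered (Dm E δ) := fun s hs t ht a ha b hb =>
      hs a (Multiset.mem_of_le ht ha) b (Multiset.mem_of_le ht hb)
    have h1 := ih (by omega) (bd_mem hh (sg_mem hs))
    have h2 : bd (sg s) ∈ Sp (Ins (Metric.closedBall (bary s) ((1 - 1 / (K : ℝ)) * δ))) := by
      refine bd_mem' (ins_hered _) (sg_mem fun a ha => ?_)
      refine bary_dist hδ hs.1 ?_ ha
      rw [hs.2]; exact hk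
    have h3 := sd_ins (convex_closedBall _ _) k h2
    refine cone_mem _ (fun t ht => ?_) (sp_inter h1 h3)
    intro a ha b hb
    rcases Multiset.mem_cons.1 ha with rfl | ha <;> rcases Multiset.mem_cons.1 hb with rfl | hb
    · rw [dist_self]; positivity
    · rw [dist_comm]; exact ht.2 b hb
    · exact ht.2 a ha
    · exact ht.1 a ha b hb

/-- Iterated subdivision. -/
noncomputable def sdI (k : ℕ) : ℕ → Ch E →ₗ[ZMod 2] Ch E
  | 0 => LinearMap.id
  | M + 1 => sd k ∘ₗ sdI k M

lemma sdI_succ (k M : ℕ) (c : Ch E) : sdI k (M + 1) c = sd k (sdI k M c) := rfl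

lemma sdI_zero (M : ℕ) (c : Ch E) : sdI 0 M c = c := by
  induction M with
  | zero => rfl
  | succ M ih => rw [sdI_succ, ih]; rfl

lemma sdI_card {k : ℕ} (M : ℕ) {c : Ch E} (hc : c ∈ Sp (Cd E k)) : sdI k M c ∈ Sp (Cd E k) := by
  induction M with
  | zero => exact hc
  | succ M ih => exact sd_card ih

lemma bd_sdI {k : ℕ} (M : ℕ) {c : Ch E} (hc : c ∈ Sp (Cd E (k + 1))) :
    bd (sdI (k + 1) M c) = sdI k M (bd c) := by
  induction M with
  | zero => rfl
  | succ M ih => rw [sdI_succ, bd_sd (sdI_card M hc), ih, sdI_succ]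

lemma sdI_mp (f : E → EE) (hf : ∀ s : Multiset E, s ≠ 0 → f (bary s) = bary (s.map f)) (k M : ℕ)
    (c : Ch E) : mp f (sdI k M c) = sdI k M (mp f c) := by
  induction M with
  | zero => rfl
  | succ M ih => rw [sdI_succ, sd_mp f hf, ih, sdI_succ]

lemma sdI_car {𝒞 : Set (Set E)} (hC : ∀ C ∈ 𝒞, Convex ℝ C) (k M : ℕ) {c : Ch E}
    (hc : c ∈ Sp (Car 𝒞)) : sdI k M c ∈ Sp (Car 𝒞) := by
  induction M with
  | zero => exact hc
  | succ M ih => exact sd_car hC k ih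

lemma sdI_mesh {δ : ℝ} (hδ : 0 ≤ δ) {K : ℕ} (hK : 1 ≤ K) {k : ℕ} (hk : k ≤ K) (M : ℕ) {c : Ch E}
    (hc : c ∈ Sp (Dm E δ ∩ Cd E k)) : sdI k M c ∈ Sp (Dm E ((1 - 1 / (K : ℝ)) ^ M * δ)) := by
  have hK0 : 0 ≤ 1 - 1 / (K : ℝ) := by
    have : (1 : ℝ) ≤ K := by exact_mod_cast hK
    rw [sub_nonneg, div_le_one (by linarith)]; exact this
  induction M with
  | zero => simpa [sdI] using sp_mono Set.inter_subset_left hc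
  | succ M ih =>
    have := sd_mesh (by positivity) hK hk
      (sp_inter ih (sdI_card M (sp_mono Set.inter_subset_right hc)))
    rw [sdI_succ, pow_succ', mul_assoc]
    exact this

end Subdivision

section Lab

variable {n : ℕ}

/-- Index of a maximal coordinate. -/
noncomputable def amax (u : Fin (n + 1) → ℝ) : Fin (n + 1) := (Finite.exists_max u).choose

lemma amax_spec (u : Fin (n + 1) → ℝ) (i : Fin (n + 1)) : u i ≤ u (amax u) :=
  (Finite.exists_max u).choose_spec i

/-- Index of a coordinate of maximal absolute value. -/
noncomputable def aidx (w : Fin (n + 1) → ℝ) : Fin (n + 1) := amax fun i => |w i|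

lemma aidx_norm (w : Fin (n + 1) → ℝ) : ‖w‖ ≤ |w (aidx w)| := by
  rw [pi_norm_le_iff_of_nonneg (abs_nonneg _)]
  intro i
  exact amax_spec (fun i => |w i|) i

lemma aidx_neg (w : Fin (n + 1) → ℝ) : aidx (-w) = aidx w := by
  unfold aidx; simp

open Classical in
/-- Signed label of a nonzero vector. -/
noncomputable def lab (w : Fin (n + 1) → ℝ) : Fin (n + 1) × Bool :=
  (aidx w, decide (0 < w (aidx w)))

lemma lab_neg (w : Fin (n + 1) → ℝ) (hw : w ≠ 0) : lab (-w) = tau (lab w) := by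
  unfold lab tau
  rw [aidx_neg]
  have h1 := aidx_norm w
  have h2 : 0 < ‖w‖ := norm_pos_iff.2 hw
  have h3 : w (aidx w) ≠ 0 := by
    intro h; rw [h, abs_zero] at h1; linarith
  ext1
  · rfl
  · simp only [Pi.neg_apply]
    rcases lt_or_gt_of_ne h3 with h | h
    · simp [h, h.le]
    · simp [h, h.le]

lemma lab_close {η : ℝ} {w v : Fin (n + 1) → ℝ} (hw : η ≤ ‖w‖) (hv : η ≤ ‖v‖)
    (h : dist w v < η) (hj : (lab w).1 = (lab v).1) : lab w = lab v := by
  refine Prod.ext hj ?_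
  change aidx w = aidx v at hj
  have h1 := aidx_norm w
  have h2 := aidx_norm v
  have h3 := (dist_le_pi_dist w v (aidx w)).trans_lt h
  rw [Real.dist_eq] at h3
  unfold lab
  simp only
  rw [← hj] at h2 ⊢
  rw [decide_eq_decide]
  have := abs_lt.1 h3
  constructor
  · intro hp
    rw [abs_of_pos hp] at h1
    linarith
  · intro hp
    rw [abs_of_pos hp] at h2
    linarith

lemma fine {E : Type*} [NormedAddCommGroup E] [NormedSpace ℝ E] {Kc : Set E} (hKc : IsCompact Kc)
    {F : E → Fin (n + 1) → ℝ} (hF : ContinuousOn F Kc) (hF0 : ∀ x ∈ Kc, F x ≠ 0)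
    {𝒞 : Set (Set E)} (hC : ∀ C ∈ 𝒞, Convex ℝ C ∧ C ⊆ Kc) {k : ℕ} {c : Ch E}
    (hc : c ∈ Sp (Cd E k)) (hc' : c ∈ Sp (Car 𝒞)) :
    ∀ᶠ M in Filter.atTop, mp (fun x => lab (F x)) (sdI k M c) ∈ Sp (NoOpp (n + 1)) := by
  obtain ⟨η, hη, hη'⟩ : ∃ η > 0, ∀ x ∈ Kc, η ≤ ‖F x‖ := by
    have hcl := (hKc.image_of_continuousOn hF).isClosed.isOpen_compl
    have h0 : (0 : Fin (n + 1) → ℝ) ∈ (F '' Kc)ᶜ := by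
      rintro ⟨x, hx, h⟩; exact hF0 x hx h
    obtain ⟨η, hη, hb⟩ := Metric.isOpen_iff.1 hcl 0 h0
    refine ⟨η, hη, fun x hx => ?_⟩
    by_contra! h
    exact hb (mem_ball_zero_iff.2 h) ⟨x, hx, rfl⟩
  obtain ⟨δ, hδ, hδ'⟩ := Metric.uniformContinuousOn_iff.1
    (hKc.uniformContinuousOn_of_continuous hF) η hη
  obtain ⟨D, hD⟩ := Metric.isBounded_iff.1 hKc.isBounded
  have hD0 : c ∈ Sp (Dm E (max D 0) ∩ Cd E k) := by
    refine sp_inter (sp_mono (fun s hs => ?_) hc') hc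
    obtain ⟨C, h, hs⟩ := hs
    intro a ha b hb
    exact (hD ((hC C h).2 (hs a ha)) ((hC C h).2 (hs b hb))).trans (le_max_left _ _)
  have hlim : Filter.Tendsto (fun M : ℕ => (1 - 1 / ((k + 1 : ℕ) : ℝ)) ^ M * max D 0)
      Filter.atTop (nhds 0) := by
    have hp : Filter.Tendsto (fun M : ℕ => (1 - 1 / ((k + 1 : ℕ) : ℝ)) ^ M)
        Filter.atTop (nhds 0) := by
      refine tendsto_pow_atTop_nhds_zero_of_lt_one ?_ ?_
      · rw [sub_nonneg, div_le_one (by positivity)]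
        push_cast
        linarith [(Nat.cast_nonneg k : (0 : ℝ) ≤ k)]
      · have : (0 : ℝ) < 1 / ((k + 1 : ℕ) : ℝ) := by positivity
        linarith
    simpa using hp.mul_const (max D 0)
  filter_upwards [hlim.eventually_lt_const hδ] with M hM
  have h1 := sdI_mesh (le_max_right D 0) (K := k + 1) (by omega) (by omega) M hD0
  have h2 := sdI_car (fun C h => (hC C h).1) k M hc'
  refine mp_mem _ (fun s hs => ?_) (sp_inter h1 h2)
  obtain ⟨hs1, C, hCC, hs2⟩ := hs
  intro a ha b hb hab
  obtain ⟨x, hx, rfl⟩ := Multiset.mem_map.1 ha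
  obtain ⟨y, hy, rfl⟩ := Multiset.mem_map.1 hb
  have hxK := (hC C hCC).2 (hs2 x hx)
  have hyK := (hC C hCC).2 (hs2 y hy)
  exact lab_close (hη' x hxK) (hη' y hyK)
    (hδ' x hxK y hyK ((hs1 x hx y hy).trans_lt hM)) hab

end Lab

section Prism

variable {E : Type*} [NormedAddCommGroup E] [NormedSpace ℝ E]

/-- Level inclusion. -/
noncomputable def lev (t : ℝ) : Ch E →ₗ[ZMod 2] Ch (E × ℝ) := mp fun x => (x, t)

/-- Prism operator. -/
noncomputable def pr : ℕ → Ch E →ₗ[ZMod 2] Ch (E × ℝ)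
  | 0 => 0
  | k + 1 => ext1 fun s => cone (bary s, (1 / 2 : ℝ))
      (lev 0 (sg s) + lev 1 (sg s) + pr k (bd (sg s)))

lemma pr_succ (k : ℕ) (s : Multiset E) : pr (k + 1) (sg s) = cone (bary s, (1 / 2 : ℝ))
      (lev 0 (sg s) + lev 1 (sg s) + pr k (bd (sg s))) := by
  rw [pr, ext1_sg]

lemma lev_card (t : ℝ) {k : ℕ} {c : Ch E} (hc : c ∈ Sp (Cd E k)) : lev t c ∈ Sp (Cd (E × ℝ) k) :=
  mp_mem _ (fun s hs => by
    show Multiset.card _ = _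
    rw [Multiset.card_map]; exact hs) hc

lemma bd_lev (t : ℝ) (c : Ch E) : bd (lev t c) = lev t (bd c) := bd_mp _ c

lemma pr_card {k : ℕ} {c : Ch E} (hc : c ∈ Sp (Cd E k)) : pr k c ∈ Sp (Cd (E × ℝ) (k + 1)) := by
  induction k generalizing c with
  | zero => rw [pr]; exact Submodule.zero_mem _
  | succ k ih =>
    refine sp_lin (pr (k + 1)) (fun s hs => ?_) hc
    rw [pr_succ]
    refine cone_mem (P := Cd (E × ℝ) (k + 1)) _ (fun t ht => by
      show Multiset.card _ = _
      rw [Multiset.card_cons, ht]) ?_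
    exact Submodule.add_mem _ (Submodule.add_mem _ (lev_card 0 (sg_mem hs))
      (lev_card 1 (sg_mem hs))) (ih (bd_card (sg_mem hs)))

lemma ch_six {A : Type*} (x y z : Ch A) : x + y + (x + y + z) = z := by
  rw [← add_assoc, ch_double, zero_add]

lemma bd_pr {k : ℕ} {c : Ch E} (hc : c ∈ Sp (Cd E (k + 1))) :
    bd (pr (k + 1) c) = lev 0 c + lev 1 c + pr k (bd c) := by
  induction k generalizing c with
  | zero =>
    refine sp_induction (p := fun c => bd (pr (0 + 1) c) = lev 0 c + lev 1 c + pr 0 (bd c))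
      (by simp only [map_zero, add_zero])
      (fun x y hx hy => by simp only [map_add, hx, hy]; abel) (fun s hs => ?_) hc
    have h0 : ∀ c ∈ Sp (Cd E 0), lev 0 c = lev 1 c := by
      intro c hc
      refine mp_congr _ _ (fun s hs a ha => ?_) hc
      rw [Multiset.card_eq_zero.1 hs] at ha; simp at ha
    rw [pr_succ, bd_cone, map_add bd, map_add bd, bd_lev, bd_lev, h0 _ (bd_card (sg_mem hs)), ch_double]
    rw [pr, LinearMap.zero_apply, map_zero, add_zero, add_zero, map_zero, add_zero]
  | succ k ih =>
    refine sp_induction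
      (p := fun c => bd (pr (k + 1 + 1) c) = lev 0 c + lev 1 c + pr (k + 1) (bd c))
      (by simp only [map_zero, add_zero])
      (fun x y hx hy => by simp only [map_add, hx, hy]; abel) (fun s hs => ?_) hc
    rw [pr_succ, bd_cone, map_add bd, map_add bd, bd_lev, bd_lev, ih (bd_card (sg_mem hs)), ch_six,
      bd_bd, map_zero, map_zero, add_zero]

lemma pr_ins {C : Set E} (hC : Convex ℝ C) (k : ℕ) {c : Ch E} (hc : c ∈ Sp (Ins C)) :
    pr k c ∈ Sp (Ins (C ×ˢ Set.Icc (0 : ℝ) 1)) := by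
  have hlev : ∀ t : ℝ, 0 ≤ t → t ≤ 1 → ∀ c ∈ Sp (Ins C),
      lev t c ∈ Sp (Ins (C ×ˢ Set.Icc (0 : ℝ) 1)) := by
    intro t h0 h1 c hc
    refine mp_mem _ (fun s hs a ha => ?_) hc
    obtain ⟨x, hx, rfl⟩ := Multiset.mem_map.1 ha
    exact ⟨hs x hx, h0, h1⟩
  induction k generalizing c with
  | zero => rw [pr]; exact Submodule.zero_mem _
  | succ k ih =>
    by_cases hc0 : c = 0
    · rw [hc0, map_zero]; exact Submodule.zero_mem _
    · refine sp_lin (pr (k + 1)) (fun s hs => ?_) hc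
      rw [pr_succ]
      have h1 : lev 0 (sg s) + lev 1 (sg s) + pr k (bd (sg s)) ∈
          Sp (Ins (C ×ˢ Set.Icc (0 : ℝ) 1)) :=
        Submodule.add_mem _ (Submodule.add_mem _ (hlev 0 le_rfl zero_le_one _ (sg_mem hs))
          (hlev 1 zero_le_one le_rfl _ (sg_mem hs))) (ih (bd_mem' (ins_hered C) (sg_mem hs)))
      by_cases h : s = 0
      · subst h
        have : lev 0 (sg (0 : Multiset E)) + lev 1 (sg (0 : Multiset E)) +
            pr k (bd (sg (0 : Multiset E))) = 0 := by
          rw [bd_zero, map_zero, add_zero]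
          unfold lev
          rw [mp_sg, mp_sg, Multiset.map_zero, Multiset.map_zero, ch_double]
        rw [this, map_zero]; exact Submodule.zero_mem _
      · refine cone_mem _ (fun t ht a ha => ?_) h1
        rcases Multiset.mem_cons.1 ha with rfl | ha
        · exact ⟨bary_mem hC hs h, by norm_num⟩
        · exact ht a ha

lemma bary_lev (t : ℝ) (s : Multiset E) (h : s ≠ 0) :
    (bary s, t) = bary (s.map fun x => (x, t)) := by
  have hc : (s.card : ℝ) ≠ 0 := by
    exact_mod_cast (Multiset.card_pos.2 h).ne'
  have hs : (s.map fun x => (x, t)).sum = (s.sum, (s.card : ℝ) * t) := by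
    clear h hc
    induction s using Multiset.induction with
    | empty => simp; rfl
    | cons a s ih =>
      rw [Multiset.map_cons, Multiset.sum_cons, ih, Multiset.sum_cons, Multiset.card_cons]
      push_cast
      ext1
      · rfl
      · simp; ring
  unfold bary
  rw [hs, Multiset.card_map]
  ext1
  · rfl
  · simp only [Prod.smul_mk, smul_eq_mul]
    field_simp

lemma bary_neg (s : Multiset E) : -(bary s) = bary (s.map fun x => -x) := by
  unfold bary
  rw [Multiset.card_map, Multiset.sum_map_neg, smul_neg, Multiset.map_id']

end Prism

section Core

variable {n : ℕ}

lemma hom_step {E : Type*} [NormedAddCommGroup E] [NormedSpace ℝ E] {Kc : Set E}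
    (hKc : IsCompact Kc) {F₀ F₁ : E → Fin (n + 1) → ℝ} (h₀ : ContinuousOn F₀ Kc)
    (h₁ : ContinuousOn F₁ Kc)
    (hne : ∀ x ∈ Kc, ∀ t ∈ Set.Icc (0 : ℝ) 1, (1 - t) • F₀ x + t • F₁ x ≠ 0)
    {𝒞 : Set (Set E)} (hC : ∀ C ∈ 𝒞, Convex ℝ C ∧ C ⊆ Kc) {z : Ch E}
    (hz : z ∈ Sp (Cd E (n + 1))) (hz' : z ∈ Sp (Car 𝒞)) (hbz : bd z = 0) :
    ∀ᶠ M in Filter.atTop, alph true (mp (fun x => lab (F₀ x)) (sdI (n + 1) M z)) =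
      alph true (mp (fun x => lab (F₁ x)) (sdI (n + 1) M z)) := by
  let H : E × ℝ → Fin (n + 1) → ℝ := fun p => (1 - p.2) • F₀ p.1 + p.2 • F₁ p.1
  have hH : ContinuousOn H (Kc ×ˢ Set.Icc (0 : ℝ) 1) := by
    have a : ContinuousOn (fun p : E × ℝ => F₀ p.1) (Kc ×ˢ Set.Icc (0 : ℝ) 1) :=
      h₀.comp continuousOn_fst fun p hp => hp.1
    have b : ContinuousOn (fun p : E × ℝ => F₁ p.1) (Kc ×ˢ Set.Icc (0 : ℝ) 1) :=
      h₁.comp continuousOn_fst fun p hp => hp.1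
    exact ((continuousOn_const.sub continuousOn_snd).smul a).add (continuousOn_snd.smul b)
  let 𝒞' : Set (Set (E × ℝ)) := (fun C => C ×ˢ Set.Icc (0 : ℝ) 1) '' 𝒞
  have hC' : ∀ C ∈ 𝒞', Convex ℝ C ∧ C ⊆ Kc ×ˢ Set.Icc (0 : ℝ) 1 := by
    rintro _ ⟨C, h, rfl⟩
    exact ⟨(hC C h).1.prod (convex_Icc 0 1), Set.prod_mono (hC C h).2 subset_rfl⟩
  have hP : pr (n + 1) z ∈ Sp (Cd (E × ℝ) (n + 1 + 1)) := pr_card hz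
  have hP' : pr (n + 1) z ∈ Sp (Car 𝒞') := by
    refine sp_lin (pr (n + 1)) (fun s hs => ?_) hz'
    obtain ⟨C, h, hs⟩ := hs
    exact sp_mono (P := Ins (C ×ˢ Set.Icc (0 : ℝ) 1)) (Q := Car 𝒞')
      (fun t ht => ⟨_, ⟨C, h, rfl⟩, ht⟩) (pr_ins (hC C h).1 _ (sg_mem hs))
  have hbP : bd (pr (n + 1) z) = lev 0 z + lev 1 z := by
    rw [bd_pr hz, hbz, map_zero, add_zero]
  filter_upwards [fine (hKc.prod isCompact_Icc) hH (fun p hp => hne p.1 hp.1 p.2 hp.2) hC' hP hP']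
    with M hM
  have hcard : mp (fun x => lab (H x)) (sdI (n + 1 + 1) M (pr (n + 1) z)) ∈
      Sp (Cd (Fin (n + 1) × Bool) (n + 1 + 1)) :=
    mp_mem _ (fun s hs => by
      show Multiset.card _ = _
      rw [Multiset.card_map]; exact hs) (sdI_card M hP)
  have key := alph_bd true hM
  rw [alph_big true (by omega) hcard, alph_tau, alph_big (!true) (by omega) hcard, add_zero, bd_mp,
    bd_sdI M hP, hbP, map_add, map_add, map_add] at key
  have hl : ∀ t : ℝ, mp (fun x => lab (H x)) (sdI (n + 1) M (lev t z)) =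
      mp (fun x => lab (H (x, t))) (sdI (n + 1) M z) := by
    intro t
    unfold lev
    rw [← sdI_mp (fun x => (x, t)) (fun s hs => bary_lev t s hs), mp_mp]
    rfl
  rw [hl, hl] at key
  simp only [H, sub_zero, one_smul, zero_smul, add_zero, sub_self, zero_add] at key
  exact CharTwo.add_eq_zero.1 key

/-- Basis vectors. -/
noncomputable def ev (n : ℕ) (i : ℕ) : Fin (n + 1) → ℝ := fun j => if (j : ℕ) = i then 1 else 0

/-- Negation on chains. -/
noncomputable abbrev ng (n : ℕ) : Ch (Fin (n + 1) → ℝ) →ₗ[ZMod 2] Ch (Fin (n + 1) → ℝ) :=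
  mp fun x => -x

/-- Hemispheres. -/
noncomputable def hem (n : ℕ) : ℕ → Ch (Fin (n + 1) → ℝ)
  | 0 => sg {ev n 0}
  | i + 1 => cone (ev n (i + 1)) (hem n i + ng n (hem n i))

lemma ng_ng (c : Ch (Fin (n + 1) → ℝ)) : ng n (ng n c) = c := by
  rw [ng, mp_mp]
  refine ch_eq (mp _) LinearMap.id (fun s => ?_) c
  rw [mp_sg]
  simp

lemma ng_card {k : ℕ} {c : Ch (Fin (n + 1) → ℝ)} (hc : c ∈ Sp (Cd _ k)) : ng n c ∈ Sp (Cd _ k) :=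
  mp_mem _ (fun s hs => by
    show Multiset.card _ = _
    rw [Multiset.card_map]; exact hs) hc

lemma hem_card (i : ℕ) : hem n i ∈ Sp (Cd _ (i + 1)) := by
  induction i with
  | zero => exact sg_mem (by simp [Cd])
  | succ i ih =>
    refine cone_mem (P := Cd _ (i + 1)) _ (fun t ht => ?_) (Submodule.add_mem _ ih (ng_card ih))
    show Multiset.card _ = _
    rw [Multiset.card_cons, ht]

lemma bd_hem_zero : bd (hem n 0) = sg 0 := by
  rw [hem, ← Multiset.cons_zero, bd_cons, bd_zero, map_zero, add_zero]

lemma ch_four {A : Type*} (x y : Ch A) : x + y + (y + x) = 0 := by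
  rw [add_comm y x, ch_double]

lemma bd_hem_sym (i : ℕ) : bd (hem n i + ng n (hem n i)) = 0 ∧
    bd (hem n (i + 1)) = hem n i + ng n (hem n i) := by
  have h : bd (hem n i + ng n (hem n i)) = 0 := by
    induction i with
    | zero =>
      rw [map_add, bd_mp, bd_hem_zero, mp_sg, Multiset.map_zero, ch_double]
    | succ i ih =>
      have : bd (hem n (i + 1)) = hem n i + ng n (hem n i) := by
        rw [hem, bd_cone, ih, map_zero, add_zero]
      rw [map_add, bd_mp, this, map_add, ng_ng, ch_four]
  refine ⟨h, ?_⟩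
  rw [hem, bd_cone, h, map_zero, add_zero]

/-- Carrier sets. -/
def Cε (ε : Fin (n + 1) → ℝ) : Set (Fin (n + 1) → ℝ) := {x | ‖x‖ ≤ 1 ∧ ∑ j, ε j * x j = 1}

/-- Carrier family. -/
def Cfam (n : ℕ) : Set (Set (Fin (n + 1) → ℝ)) := {C | ∃ ε : Fin (n + 1) → ℝ, (∀ j, |ε j| ≤ 1) ∧ C = Cε ε}

/-- Compact set containing all carriers. -/
def Kcp (n : ℕ) : Set (Fin (n + 1) → ℝ) := {x | ‖x‖ ≤ 1 ∧ 1 ≤ ((n : ℝ) + 1) * ‖x‖}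

lemma kcp_compact : IsCompact (Kcp n) := by
  refine Metric.isCompact_of_isClosed_isBounded ?_ ?_
  · exact (isClosed_le continuous_norm continuous_const).inter
      (isClosed_le continuous_const (continuous_const.mul continuous_norm))
  · refine (Metric.isBounded_closedBall (x := (0 : Fin (n + 1) → ℝ)) (r := 1)).subset fun x hx => ?_
    simpa using hx.1

lemma kcp_ne {x : Fin (n + 1) → ℝ} (hx : x ∈ Kcp n) : x ≠ 0 := by
  rintro rfl
  have := hx.2
  rw [norm_zero] at this; linarith

lemma cfam_spec : ∀ C ∈ Cfam n, Convex ℝ C ∧ C ⊆ Kcp n := by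
  rintro _ ⟨ε, hε, rfl⟩
  constructor
  · intro x hx y hy a b ha hb hab
    refine ⟨?_, ?_⟩
    · have := (convex_closedBall (0 : Fin (n + 1) → ℝ) 1) (x := x) (by simpa using hx.1)
        (y := y) (by simpa using hy.1) ha hb hab
      simpa using this
    · have : ∑ j, ε j * (a • x + b • y) j = a * ∑ j, ε j * x j + b * ∑ j, ε j * y j := by
        rw [Finset.mul_sum, Finset.mul_sum, ← Finset.sum_add_distrib]
        refine Finset.sum_congr rfl fun j _ => ?_
        simp; ring
      rw [this, hx.2, hy.2]; linarith
  · intro x hx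
    refine ⟨hx.1, ?_⟩
    refine hx.2.symm.le.trans ?_
    calc ∑ j, ε j * x j ≤ ∑ _j : Fin (n + 1), ‖x‖ := by
          refine Finset.sum_le_sum fun j _ => ?_
          calc ε j * x j ≤ |ε j * x j| := le_abs_self _
            _ = |ε j| * |x j| := abs_mul _ _
            _ ≤ 1 * ‖x‖ := by
              gcongr
              · exact hε j
              · exact norm_le_pi_norm x j
            _ = ‖x‖ := one_mul _
      _ = ((n : ℝ) + 1) * ‖x‖ := by simp

/-- Refined carriers. -/
def Cref (n i : ℕ) : Set (Multiset (Fin (n + 1) → ℝ)) :=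
  {s | ∃ ε : Fin (n + 1) → ℝ, (∀ j, |ε j| ≤ 1) ∧ ∀ a ∈ s, a ∈ Cε ε ∧ ∀ j : Fin (n + 1), i < j → a j = 0}

lemma ng_cref {i : ℕ} {c : Ch (Fin (n + 1) → ℝ)} (hc : c ∈ Sp (Cref n i)) :
    ng n c ∈ Sp (Cref n i) := by
  refine mp_mem _ (fun s hs => ?_) hc
  obtain ⟨ε, hε, hs⟩ := hs
  refine ⟨-ε, fun j => by simpa using hε j, fun a ha => ?_⟩
  obtain ⟨x, hx, rfl⟩ := Multiset.mem_map.1 ha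
  obtain ⟨h1, h2⟩ := hs x hx
  refine ⟨⟨by simpa using h1.1, by simpa using h1.2⟩, fun j hj => by simp [h2 j hj]⟩

lemma ev_norm (i : ℕ) : ‖ev n i‖ ≤ 1 := by
  rw [pi_norm_le_iff_of_nonneg zero_le_one]
  intro j
  unfold ev
  split_ifs <;> simp

lemma hem_cref (i : ℕ) (hi : i ≤ n) : hem n i ∈ Sp (Cref n i) := by
  induction i with
  | zero =>
    refine sg_mem ⟨fun j => if (j : ℕ) = 0 then 1 else 0, fun j => ?_, fun a ha => ?_⟩
    · simp only; split_ifs <;> simp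
    · rw [Multiset.mem_singleton] at ha
      subst ha
      refine ⟨⟨ev_norm 0, ?_⟩, fun j hj => ?_⟩
      · unfold ev
        rw [Finset.sum_eq_single (0 : Fin (n + 1))]
        · simp
        · intro j _ hj
          have : (j : ℕ) ≠ 0 := fun h => hj (Fin.ext h)
          simp [this]
        · simp
      · unfold ev; rw [if_neg]; omega
  | succ i ih =>
    have ih := ih (by omega)
    refine cone_mem (P := Cref n i) _ (fun s hs => ?_) (Submodule.add_mem _ ih (ng_cref ih))
    obtain ⟨ε, hε, hs⟩ := hs
    let q : Fin (n + 1) := ⟨i + 1, by omega⟩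
    refine ⟨Function.update ε q 1, fun j => ?_, fun a ha => ?_⟩
    · by_cases h : j = q
      · subst h; simp
      · rw [Function.update_of_ne h]; exact hε j
    · rcases Multiset.mem_cons.1 ha with rfl | ha
      · refine ⟨⟨ev_norm _, ?_⟩, fun j hj => ?_⟩
        · unfold ev
          rw [Finset.sum_eq_single q]
          · simp [q]
          · intro j _ hj
            have : (j : ℕ) ≠ i + 1 := fun h => hj (Fin.ext h)
            simp [this]
          · simp
        · unfold ev; rw [if_neg]; omega
      · obtain ⟨h1, h2⟩ := hs a ha
        refine ⟨⟨h1.1, ?_⟩, fun j hj => h2 j (by omega)⟩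
        rw [← h1.2]
        refine Finset.sum_congr rfl fun j _ => ?_
        by_cases h : j = q
        · subst h
          rw [h2 q (by show i < i + 1; omega)]; simp
        · rw [Function.update_of_ne h]

lemma cref_car {i : ℕ} : Cref n i ⊆ Car (Cfam n) := by
  rintro s ⟨ε, hε, hs⟩
  exact ⟨Cε ε, ⟨ε, hε, rfl⟩, fun a ha => (hs a ha).1⟩

lemma sdI_ng (k M : ℕ) (c : Ch (Fin (n + 1) → ℝ)) : ng n (sdI k M c) = sdI k M (ng n c) :=
  sdI_mp (fun x => -x) (fun s _ => bary_neg s) k M c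

lemma mp_on_car {B : Type*} {f g : (Fin (n + 1) → ℝ) → B} (h : ∀ x, x ≠ 0 → f x = g x)
    {c : Ch (Fin (n + 1) → ℝ)} (hc : c ∈ Sp (Car (Cfam n))) : mp f c = mp g c := by
  refine mp_congr f g (fun s hs a ha => h a ?_) hc
  obtain ⟨C, hC, hs⟩ := hs
  exact kcp_ne ((cfam_spec C hC).2 (hs a ha))

lemma odd_case {F : (Fin (n + 1) → ℝ) → Fin (n + 1) → ℝ} (hF : ContinuousOn F {0}ᶜ)
    (hF0 : ∀ x, x ≠ 0 → F x ≠ 0) (hodd : ∀ x, x ≠ 0 → F (-x) = -F x) (i : ℕ) (hi : i ≤ n) :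
    ∀ᶠ M in Filter.atTop, alph true (mp (fun x => lab (F x))
      (sdI (i + 1) M (hem n i + ng n (hem n i)))) = 1 := by
  have hstep : ∀ i ≤ n, ∀ᶠ M in Filter.atTop, alph true (mp (fun x => lab (F x))
      (sdI (i + 1) M (hem n i + ng n (hem n i)))) =
      alph true (mp (fun x => lab (F x)) (sdI i M (bd (hem n i)))) := by
    intro i hi
    have hcar : hem n i ∈ Sp (Car (Cfam n)) := sp_mono cref_car (hem_cref i hi)
    filter_upwards [fine kcp_compact (hF.mono fun x hx => kcp_ne hx)
      (fun x hx => hF0 x (kcp_ne hx)) cfam_spec (hem_card i) hcar] with M hM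
    have key := alph_bd true hM
    rw [bd_mp, bd_sdI M (hem_card i)] at key
    rw [key, map_add, map_add, map_add, mp_mp, ← sdI_ng, mp_mp]
    congr 2
    refine mp_on_car (fun x hx => ?_) (sdI_car (fun C h => (cfam_spec C h).1) _ M hcar)
    simp only [Function.comp]
    rw [hodd x hx, lab_neg _ (hF0 x hx)]
  induction i with
  | zero =>
    filter_upwards [hstep 0 hi] with M hM
    rw [hM, bd_hem_zero, sdI_zero, mp_sg, Multiset.map_zero, alph_sg, al_zero]
  | succ i ih =>
    filter_upwards [hstep (i + 1) hi, ih (by omega)] with M hM hM'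
    rw [hM, (bd_hem_sym i).2, hM']

lemma even_case {F : (Fin (n + 1) → ℝ) → Fin (n + 1) → ℝ} 
    (heven : ∀ x, x ≠ 0 → F (-x) = F x) (M : ℕ) :
    alph true (mp (fun x => lab (F x)) (sdI (n + 1) M (hem n n + ng n (hem n n)))) = 0 := by
  have hcar : hem n n ∈ Sp (Car (Cfam n)) := sp_mono cref_car (hem_cref n le_rfl)
  rw [map_add, map_add, ← sdI_ng, mp_mp]
  have : mp ((fun x => lab (F x)) ∘ fun x => -x) (sdI (n + 1) M (hem n n)) =
      mp (fun x => lab (F x)) (sdI (n + 1) M (hem n n)) := by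
    refine mp_on_car (fun x hx => ?_) (sdI_car (fun C h => (cfam_spec C h).1) _ M hcar)
    simp only [Function.comp]
    rw [heven x hx]
  rw [this, ch_double, map_zero]

theorem core (F : ℕ → (Fin (n + 1) → ℝ) → Fin (n + 1) → ℝ) (hF : ∀ j, ContinuousOn (F j) {0}ᶜ)
    (hne : ∀ j x, x ≠ 0 → ∀ t ∈ Set.Icc (0 : ℝ) 1, (1 - t) • F j x + t • F (j + 1) x ≠ 0)
    (heven : ∀ x, x ≠ 0 → F 0 (-x) = F 0 x) (m : ℕ) (hodd : ∀ x, x ≠ 0 → F m (-x) = -F m x) :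
    False := by
  have hcar : hem n n ∈ Sp (Cref n n) := hem_cref n le_rfl
  have hz : hem n n + ng n (hem n n) ∈ Sp (Cd _ (n + 1)) :=
    Submodule.add_mem _ (hem_card n) (ng_card (hem_card n))
  have hz' : hem n n + ng n (hem n n) ∈ Sp (Car (Cfam n)) :=
    sp_mono cref_car (Submodule.add_mem _ hcar (ng_cref hcar))
  have hall : ∀ j, ∀ᶠ M in Filter.atTop,
      alph true (mp (fun x => lab (F j x)) (sdI (n + 1) M (hem n n + ng n (hem n n)))) = 0 := by
    intro j
    induction j with
    | zero => exact Filter.Eventually.of_forall (even_case heven)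
    | succ j ih =>
      filter_upwards [ih, hom_step kcp_compact ((hF j).mono fun x hx => kcp_ne hx)
        ((hF (j + 1)).mono fun x hx => kcp_ne hx) (fun x hx t ht => hne j x (kcp_ne hx) t ht)
        cfam_spec hz hz' (bd_hem_sym n).1] with M h1 h2
      rw [← h2, h1]
  have h0 : ∀ x, x ≠ 0 → F m x ≠ 0 := by
    intro x hx
    have := hne m x hx 0 ⟨le_rfl, zero_le_one⟩
    simpa using this
  obtain ⟨M, hM, hM'⟩ := ((hall m).and (odd_case (hF m) h0 hodd n le_rfl)).exists
  rw [hM] at hM'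
  exact zero_ne_one hM'

end Core

section Final

lemma cyc_adj (r : ℕ) (hr : 1 ≤ r) (u v : Fin (2 * r + 1)) :
    (SimpleGraph.cycleGraph (2 * r + 1)).Adj u v ↔ u - v = 1 ∨ v - u = 1 := by
  obtain ⟨q, rfl⟩ := Nat.exists_eq_add_of_le' hr
  exact SimpleGraph.cycleGraph_adj (n := 2 * q + 1)

/-- Vertices of the cycle. -/
def vt (r : ℕ) (j : ℕ) : Fin (2 * r + 1) := j • (1 : Fin (2 * r + 1))

lemma vt_succ (r j : ℕ) : vt r (j + 1) = vt r j + 1 := succ_nsmul _ _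

lemma vt_neg (r : ℕ) : -(vt r r) = vt r (r + 1) := by
  have h : (2 * r + 1) • (1 : Fin (2 * r + 1)) = 0 := by
    have := card_nsmul_eq_zero (x := (1 : Fin (2 * r + 1)))
    rwa [Fintype.card_fin] at this
  rw [neg_eq_iff_add_eq_zero]
  unfold vt
  rw [← add_nsmul]
  rwa [show r + (r + 1) = 2 * r + 1 by ring]

variable {n : ℕ}

/-- Drop the last coordinate. -/
def pd (u : Fin (n + 2) → ℝ) : Fin (n + 1) → ℝ := fun i => u i.castSucc

lemma pd_ne {u : Fin (n + 2) → ℝ} (hs : ∑ c, u c = 0) (hu : u ≠ 0) : pd u ≠ 0 := by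
  intro h
  have h1 : ∀ i : Fin (n + 1), u i.castSucc = 0 := fun i => congrFun h i
  rw [Fin.sum_univ_castSucc] at hs
  simp only [h1, Finset.sum_const_zero, zero_add] at hs
  exact hu (funext fun c => Fin.lastCases hs h1 c)

lemma pd_nonv {A B C : Fin (n + 2) → ℝ} (hA : ∑ c, A c = 1)
    (hB : ∑ c, B c = 1) (hC : ∑ c, C c = 1) (hAB : ∀ c, A c ≠ 0 → B c = 0)
    (hAC : ∀ c, A c ≠ 0 → C c = 0) {a b : ℝ} (hab : a + b = 1) :
    pd (A - a • B - b • C) ≠ 0 := by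
  refine pd_ne ?_ ?_
  · simp only [Pi.sub_apply, Pi.smul_apply, smul_eq_mul, Finset.sum_sub_distrib, ← Finset.mul_sum,
      hA, hB, hC]
    linarith
  · intro h
    obtain ⟨c, hc⟩ : ∃ c, A c ≠ 0 := by
      by_contra! h'
      simp [h'] at hA
    have := congrFun h c
    simp [hAB c hc, hAC c hc, hc] at this

theorem main_aux {V : Type} [Fintype V] (G : SimpleGraph V) (r : ℕ) (hr : 1 ≤ r) (n : ℕ)
    (hne : Nonempty (homComplex (SimpleGraph.cycleGraph (2 * r + 1)) G))
    (hX : ∀ i < n, ∀ x : homComplex (SimpleGraph.cycleGraph (2 * r + 1)) G,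
      Subsingleton (HomotopyGroup (Fin i) (homComplex (SimpleGraph.cycleGraph (2 * r + 1)) G) x))
    (col : V → Fin (n + 2)) (hcol : ∀ a b, G.Adj a b → col a ≠ col b) : False := by
  classical
  obtain ⟨R, Ψ, hR, hRR, hΨ, hΨR, hΨ0, hΨ1, hΨa⟩ :=
    realization (SimpleGraph.cycleGraph (2 * r + 1)) G (fun w => -w) (fun w => neg_neg w)
      (fun x y h => by
        rw [cyc_adj r hr] at h ⊢
        rcases h with h | h
        · right; rw [← h]; abel
        · left; rw [← h]; abel)
  obtain ⟨g, hg, hgR⟩ := equivariant_map R hR hRR n hX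
  let P : (Fin (n + 1) → ℝ) → Fin (2 * r + 1) → Fin (n + 2) → ℝ :=
    fun x w c => ∑ v with col v = c, Ψ (g x) w v
  have hPc : ∀ w, ContinuousOn (fun x => P x w) {0}ᶜ := by
    intro w
    have h1 : ContinuousOn (fun x => Ψ (g x)) {0}ᶜ := hΨ.comp_continuousOn hg
    rw [continuousOn_pi]
    intro c
    refine continuousOn_finsetSum _ fun v _ => ?_
    exact (continuous_apply v).comp_continuousOn ((continuous_apply w).comp_continuousOn h1)
  have hP1 : ∀ x w, ∑ c, P x w c = 1 := by
    intro x w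
    rw [← hΨ1 (g x) w]
    exact Finset.sum_fiberwise Finset.univ col (fun v => Ψ (g x) w v)
  have hPa : ∀ x u w, (SimpleGraph.cycleGraph (2 * r + 1)).Adj u w → ∀ c, P x u c ≠ 0 →
      P x w c = 0 := by
    intro x u w h c hc
    by_contra hc'
    obtain ⟨a, ha, ha'⟩ := Finset.exists_ne_zero_of_sum_ne_zero hc
    obtain ⟨b, hb, hb'⟩ := Finset.exists_ne_zero_of_sum_ne_zero hc'
    refine hcol a b (hΨa (g x) u w h a b ha' hb') ?_
    rw [(Finset.mem_filter.1 ha).2, (Finset.mem_filter.1 hb).2]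
  have hPn : ∀ x, x ≠ 0 → ∀ w, P (-x) w = P x (-w) := by
    intro x hx w
    funext c
    simp only [P]
    rw [hgR x hx, hΨR]
  let F : ℕ → (Fin (n + 1) → ℝ) → Fin (n + 1) → ℝ := fun j => match j with
    | 0 => fun x => pd (P x 0 - (1 / 2 : ℝ) • (P x 1 + P x (-1)))
    | j + 1 => fun x => (-1 : ℝ) ^ j • pd (P x (vt r j) - P x (vt r (j + 1)))
  have hpd : Continuous (pd : (Fin (n + 2) → ℝ) → Fin (n + 1) → ℝ) :=
    continuous_pi fun i => continuous_apply _
  have hadj1 : ∀ j, (SimpleGraph.cycleGraph (2 * r + 1)).Adj (vt r j) (vt r (j + 1)) := by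
    intro j; rw [cyc_adj r hr, vt_succ]; right; abel
  have h01 : (SimpleGraph.cycleGraph (2 * r + 1)).Adj 0 1 := by
    rw [cyc_adj r hr]; right; abel
  have h0m : (SimpleGraph.cycleGraph (2 * r + 1)).Adj 0 (-1) := by
    rw [cyc_adj r hr]; left; abel
  refine core F ?_ ?_ ?_ (r + 1) ?_
  · rintro (_ | j)
    · exact hpd.comp_continuousOn ((hPc 0).sub (((hPc 1).add (hPc (-1))).const_smul (1 / 2 : ℝ)))
    · exact (hpd.comp_continuousOn ((hPc (vt r j)).sub (hPc (vt r (j + 1))))).const_smul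
        ((-1 : ℝ) ^ j)
  · rintro (_ | j) x hx t ht
    · have key := pd_nonv (hP1 x 0) (hP1 x 1) (hP1 x (-1)) (hPa x 0 1 h01) (hPa x 0 (-1) h0m)
        (a := (1 - t) / 2 + t) (b := (1 - t) / 2) (by ring)
      convert key using 1
      funext i
      simp only [F, pd, Pi.add_apply, Pi.smul_apply, Pi.sub_apply, smul_eq_mul, pow_zero, vt,
        zero_smul, zero_add, one_smul]
      ring
    · have key := pd_nonv (hP1 x (vt r (j + 1))) (hP1 x (vt r j)) (hP1 x (vt r (j + 1 + 1)))
        (hPa x _ _ (hadj1 j).symm) (hPa x _ _ (hadj1 (j + 1)))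
        (a := 1 - t) (b := t) (by ring)
      have h1 : ((-1 : ℝ) ^ (j + 1)) ≠ 0 := pow_ne_zero _ (by norm_num)
      convert smul_ne_zero h1 key using 1
      funext i
      simp only [F, pd, Pi.add_apply, Pi.smul_apply, Pi.sub_apply, smul_eq_mul, pow_succ]
      ring
  · intro x hx
    simp only [F]
    rw [hPn x hx, hPn x hx, hPn x hx, neg_zero, neg_neg, add_comm (P x (-1))]
  · intro x hx
    simp only [F]
    rw [hPn x hx, hPn x hx, vt_neg, ← vt_neg r, neg_neg, ← smul_neg]
    congr 1
    funext i
    simp [pd]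

end Final

/-- **The Lovász conjecture** (theorem of Babson and Kozlov): if `Hom(C_{2r+1}, G)` is
`k`-connected for integers `r ≥ 1` and `k ≥ -1`, then `χ(G) ≥ k + 4`. -/
theorem lovasz_conjecture {V : Type} [Fintype V] (G : SimpleGraph V)
    (r : ℕ) (hr : 1 ≤ r) (k : ℤ) (hk : -1 ≤ k)
    (hconn : KConnected k (homComplex (SimpleGraph.cycleGraph (2 * r + 1)) G)) :
    ((k + 4).toNat : ℕ∞) ≤ G.chromaticNumber := by
  by_contra! hlt
  obtain ⟨n, rfl⟩ : ∃ n : ℕ, k = (n : ℤ) - 1 := ⟨(k + 1).toNat, by omega⟩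
  have h4 : ((n : ℤ) - 1 + 4).toNat = n + 2 + 1 := by omega
  rw [h4] at hlt
  have hle : G.chromaticNumber ≤ ((n + 2 : ℕ) : ℕ∞) := by
    rw [Nat.cast_add, Nat.cast_one] at hlt
    exact Order.le_of_lt_add_one hlt
  obtain ⟨C⟩ := SimpleGraph.chromaticNumber_le_iff_colorable.1 hle
  exact main_aux G r hr n hconn.1 (fun i hi x => hconn.2 i (by omega) x) C
    (fun a b h => C.valid h)
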